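/- arXiv:2104.02325 — 2 statements merged into one kernel-verified Lean document; each statement's English description precedes it below -/
import Mathlib

section
/- Let Δ be the bicyclic graph built as follows: take two vertices u and v joined by three internally disjoint paths P₁: v–a–e₁–b–u, P₂: u–d–e₂–c–v, and P₃ of length ℓ ≥ 1; attach rooted trees T₁, T₂, T₃, T₄ at a, b, c, d respectively, rooted trees Θ₅, Θ₆ at e₁, e₂, and rooted trees Υ₁, Υ₂ at u, v; no trees are attached at internal vertices of P₃. Assume T₁, T₂, T₃, T₄ are pairwise isomorphic as rooted trees, Θ₅ ≅ Θ₆ as rooted trees, and Υ₁ ≅ Υ₂ as rooted trees; set D = Aut(T₁)_{root}, H = Aut(Θ₅)_{root}, K = Aut(Υ₁)_{root}. Assume further that ℓ ≠ 4 or at least one of T₁, Θ₅ has more than one vertex (so no automorphism can carry P₃ onto P₁ or P₂). Then Aut(Δ) ≅ (D⁴ × H² × K²) ⋊ (Z₂ × Z₂), where the generator a of Z₂ × Z₂ (induced by exchanging P₁ and P₂ while fixing u and v) sends (d₁,d₂,d₃,d₄,h₁,h₂,k₁,k₂) to (d₃,d₄,d₁,d₂,h₂,h₁,k₁,k₂),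 and the generator b (induced by the reflection exchanging u and v while preserving each path setwise) sends it to (d₂,d₁,d₄,d₃,h₁,h₂,k₂,k₁). -/
open SimpleGraph

/-- The stabilizer `Aut(G)_v = {f ∈ Aut(G) : f(v) = v}` of a vertex `v` in the automorphism
group of a graph `G`. -/
def autStab {V : Type} (G : SimpleGraph V) (v : V) : Subgroup (G ≃g G) where
  carrier := {f | f v = v}
  one_mem' := rfl
  mul_mem' := by
    intro f g hf hg
    simp only [Set.mem_setOf_eq] at *
    show f (g v) = v
    rw [hg, hf]
  inv_mem' := by
    intro f hf
    simp only [Set.mem_setOf_eq] at *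
    calc f⁻¹ v = f⁻¹ (f v) := by rw [hf]
    _ = v := RelIso.inv_apply_self f v

/-- The automorphism of `ι → G` given by permuting coordinates by `σ`. -/
def permAut {ι G : Type} [Group G] (σ : Equiv.Perm ι) : MulAut (ι → G) where
  toFun f := f ∘ σ.symm
  invFun f := f ∘ σ
  left_inv f := by funext i; simp
  right_inv f := by funext i; simp
  map_mul' f g := rfl

/-- The action of `Equiv.Perm ι` on `ι → G` by permuting coordinates, as a homomorphism. -/
def permHom (ι G : Type) [Group G] : Equiv.Perm ι →* MulAut (ι → G) where
  toFun := permAut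
  map_one' := by ext f i; rfl
  map_mul' σ τ := by ext f i; rfl

/-- Combine two actions-by-automorphisms into one on the direct product. -/
def autProdHom {Q M N : Type} [Group Q] [Group M] [Group N]
    (φ : Q →* MulAut M) (ψ : Q →* MulAut N) : Q →* MulAut (M × N) where
  toFun q := (φ q).prodCongr (ψ q)
  map_one' := by
    show MulEquiv.prodCongr (φ 1) (ψ 1) = 1
    rw [map_one, map_one]; ext x <;> rfl
  map_mul' a b := by
    show MulEquiv.prodCongr (φ (a * b)) (ψ (a * b)) = _
    rw [map_mul, map_mul]; ext x <;> rfl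

/-- The translation action of an additive group on itself, as permutations. -/
def transPermHom (A : Type) [AddGroup A] : Multiplicative A →* Equiv.Perm A :=
  MulAction.toPermHom (Multiplicative A) A

/-- The action of (the multiplicative version of) an additive group `A` on `A → G`
by translating the coordinates. -/
def transAutHom (A G : Type) [AddGroup A] [Group G] : Multiplicative A →* MulAut (A → G) :=
  (permHom A G).comp (transPermHom A)

/-- The Klein four-group `Z₂ × Z₂` (written multiplicatively). -/
abbrev K4 : Type := Multiplicative (ZMod 2 × ZMod 2)

/-- Projection of the Klein four-group onto its first `Z₂` factor. -/
def fstK : K4 →* Multiplicative (ZMod 2) :=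
  AddMonoidHom.toMultiplicative (AddMonoidHom.fst (ZMod 2) (ZMod 2))

/-- Projection of the Klein four-group onto its second `Z₂` factor. -/
def sndK : K4 →* Multiplicative (ZMod 2) :=
  AddMonoidHom.toMultiplicative (AddMonoidHom.snd (ZMod 2) (ZMod 2))

/-- The action of `Z₂ × Z₂` on `D⁴ × H² × K²` in which the generator `a = (1,0)` sends
`(d₁,d₂,d₃,d₄,h₁,h₂,k₁,k₂)` to `(d₃,d₄,d₁,d₂,h₂,h₁,k₁,k₂)` and the generator `b = (0,1)` sends
it to `(d₂,d₁,d₄,d₃,h₁,h₂,k₂,k₁)`: the four `D`-coordinates are indexed by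
`(0,0), (0,1), (1,0), (1,1) : Z₂ × Z₂` and translated, and the pairs of `H`- resp.
`K`-coordinates are indexed by `Z₂` and translated by the first resp. second component. -/
def B2act (D H K : Type) [Group D] [Group H] [Group K] :
    K4 →* MulAut ((ZMod 2 × ZMod 2 → D) × (ZMod 2 → H) × (ZMod 2 → K)) :=
  autProdHom (transAutHom (ZMod 2 × ZMod 2) D)
    (autProdHom ((transAutHom (ZMod 2) H).comp fstK) ((transAutHom (ZMod 2) K).comp sndK))

/-- The group `(D⁴ × H² × K²) ⋊ (Z₂ × Z₂)` appearing in the class `𝓑₂`. -/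
def B2group (D H K : Type) [Group D] [Group H] [Group K] : Type :=
  ((ZMod 2 × ZMod 2 → D) × (ZMod 2 → H) × (ZMod 2 → K)) ⋊[B2act D H K] K4

instance (D H K : Type) [Group D] [Group H] [Group K] : Group (B2group D H K) :=
  inferInstanceAs (Group (_ ⋊[B2act D H K] K4))

/-- The graph obtained from `base` by attaching, for each `i : ι`, the rooted tree
`(T i, t i)` at the vertex `x i` (identifying the root `t i` with `x i`); the attached trees
are pairwise disjoint and disjoint from `base` except at the attachment vertices. -/
def attachTrees {B : Type} (base : SimpleGraph B) {ι : Type} {W : ι → Type}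
    (T : ∀ i, SimpleGraph (W i)) (t : ∀ i, W i) (x : ι → B) :
    SimpleGraph (B ⊕ Σ i, {w : W i // w ≠ t i}) where
  Adj a b :=
    match a, b with
    | .inl a, .inl b => base.Adj a b
    | .inl a, .inr ⟨i, w⟩ => a = x i ∧ (T i).Adj (t i) w.1
    | .inr ⟨i, w⟩, .inl b => b = x i ∧ (T i).Adj (t i) w.1
    | .inr ⟨i, w⟩, .inr ⟨j, w'⟩ => ∃ h : i = j, (T j).Adj (h ▸ w).1 w'.1
  symm := by
    constructor
    rintro (a | ⟨i, w⟩) (b | ⟨j, w'⟩) h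
    · exact base.adj_symm h
    · exact h
    · exact h
    · obtain ⟨rfl, hw⟩ := h
      exact ⟨rfl, (T i).adj_symm hw⟩
  loopless := by
    constructor
    rintro (a | ⟨i, w⟩) h
    · exact base.loopless.irrefl a h
    · obtain ⟨h', hw⟩ := h
      exact (T i).loopless.irrefl _ hw

/-- Vertices of a theta graph: two hub vertices `u`, `v` joined by three internally disjoint
paths having `p`, `q` and `r` internal vertices respectively. -/
inductive ThetaV (p q r : ℕ) : Type where
  | u : ThetaV p q r
  | v : ThetaV p q r
  | x1 : Fin p → ThetaV p q r
  | x2 : Fin q → ThetaV p q r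
  | x3 : Fin r → ThetaV p q r
  deriving DecidableEq

/-- The theta graph: the vertices `u` and `v` joined by three internally disjoint paths of
lengths `p + 1`, `q + 1` and `r + 1`; the internal vertices of each path are indexed starting
from the end adjacent to `v`. -/
def theta (p q r : ℕ) : SimpleGraph (ThetaV p q r) where
  Adj a b :=
    match a, b with
    | .u, .v => p = 0 ∨ q = 0 ∨ r = 0
    | .v, .u => p = 0 ∨ q = 0 ∨ r = 0
    | .v, .x1 i => i.val = 0
    | .x1 i, .v => i.val = 0
    | .u, .x1 i => i.val = p - 1
    | .x1 i, .u => i.val = p - 1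
    | .v, .x2 i => i.val = 0
    | .x2 i, .v => i.val = 0
    | .u, .x2 i => i.val = q - 1
    | .x2 i, .u => i.val = q - 1
    | .v, .x3 i => i.val = 0
    | .x3 i, .v => i.val = 0
    | .u, .x3 i => i.val = r - 1
    | .x3 i, .u => i.val = r - 1
    | .x1 i, .x1 j => i.val + 1 = j.val ∨ j.val + 1 = i.val
    | .x2 i, .x2 j => i.val + 1 = j.val ∨ j.val + 1 = i.val
    | .x3 i, .x3 j => i.val + 1 = j.val ∨ j.val + 1 = i.val
    | _, _ => False
  symm := by
    constructor
    intro a b h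
    cases a <;> cases b <;> simp only [] at h ⊢ <;> tauto
  loopless := by
    constructor
    intro a h
    cases a <;> simp only [] at h <;> omega

/-- Index type for the eight trees attached in the construction of Lemma 2.2:
four trees `T₁, T₂, T₃, T₄`, two trees `Θ₅, Θ₆`, and two trees `Υ₁, Υ₂`. -/
abbrev Stmt2Index : Type := Fin 4 ⊕ Fin 2 ⊕ Fin 2

/-- The family of vertex types of the eight attached trees. -/
def stmt2W (WT : Fin 4 → Type) (WΘ WΥ : Fin 2 → Type) : Stmt2Index → Type :=
  fun i =>
    match i with
    | .inl j => WT j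
    | .inr (.inl j) => WΘ j
    | .inr (.inr j) => WΥ j

/-- The family of the eight attached trees. -/
def stmt2T {WT : Fin 4 → Type} {WΘ WΥ : Fin 2 → Type}
    (TT : ∀ j, SimpleGraph (WT j)) (TΘ : ∀ j, SimpleGraph (WΘ j))
    (TΥ : ∀ j, SimpleGraph (WΥ j)) :
    ∀ i, SimpleGraph (stmt2W WT WΘ WΥ i) :=
  fun i =>
    match i with
    | .inl j => TT j
    | .inr (.inl j) => TΘ j
    | .inr (.inr j) => TΥ j

/-- The family of roots of the eight attached trees. -/
def stmt2root {WT : Fin 4 → Type} {WΘ WΥ : Fin 2 → Type}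
    (tT : ∀ j, WT j) (tΘ : ∀ j, WΘ j) (tΥ : ∀ j, WΥ j) :
    ∀ i, stmt2W WT WΘ WΥ i :=
  fun i =>
    match i with
    | .inl j => tT j
    | .inr (.inl j) => tΘ j
    | .inr (.inr j) => tΥ j

/-- Attachment vertices on the theta graph with hub vertices `u`, `v` and paths
`P₁ : v–a–e₁–b–u`, `P₂ : v–c–e₂–d–u` and `P₃` of length `m + 1`: the trees
`T₁, T₂, T₃, T₄` are attached at `a, b, c, d`, the trees `Θ₅, Θ₆` at `e₁, e₂`,
and the trees `Υ₁, Υ₂` at `u`, `v`. -/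
def stmt2x (m : ℕ) : Stmt2Index → ThetaV 3 3 m :=
  fun i =>
    match i with
    | .inl j => ![ThetaV.x1 0, ThetaV.x1 2, ThetaV.x2 0, ThetaV.x2 2] j
    | .inr (.inl j) => ![ThetaV.x1 1, ThetaV.x2 1] j
    | .inr (.inr j) => ![ThetaV.u, ThetaV.v] j

/-- The bicyclic graph of Lemma 2.2: two vertices `u`, `v` joined by the three internally
disjoint paths `P₁ : v–a–e₁–b–u`, `P₂ : u–d–e₂–c–v` and `P₃` of length `m + 1`, with rooted
trees `T₁, T₂, T₃, T₄` attached at `a, b, c, d`, rooted trees `Θ₅, Θ₆` attached at `e₁, e₂`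
and rooted trees `Υ₁, Υ₂` attached at `u, v`. -/
def stmt2Graph (m : ℕ) {WT : Fin 4 → Type} {WΘ WΥ : Fin 2 → Type}
    (TT : ∀ j, SimpleGraph (WT j)) (TΘ : ∀ j, SimpleGraph (WΘ j))
    (TΥ : ∀ j, SimpleGraph (WΥ j))
    (tT : ∀ j, WT j) (tΘ : ∀ j, WΘ j) (tΥ : ∀ j, WΥ j) :=
  attachTrees (theta 3 3 m) (stmt2T TT TΘ TΥ) (stmt2root tT tΘ tΥ) (stmt2x m)

/-!
Every vertex of the theta graph `Θ` formed by `P₁`, `P₂`, `P₃` has two neighbours in `Θ`, whereas a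
vertex of an attached tree off `Θ` has only one neighbour that is not farther from `Θ`. Looking at
a vertex of `Θ` whose image under an automorphism of `Δ` is farthest from `Θ`, one sees that the
automorphism preserves `Θ`. Restriction to `Θ` is therefore a homomorphism `Aut(Δ) → Aut(Θ)`; its
kernel consists of the families of rooted automorphisms of the trees, i.e. `D⁴ × H² × K²`.

An automorphism of `Θ` preserves `{u, v}` and permutes the three paths. If it comes from `Δ`, it
cannot move `P₃`: either the lengths differ, or the position of a nontrivial tree on `P₁` and `P₂`
is an attachment point and stays one, while `P₃` carries none. So the image of the restriction is
the Klein four-group of symmetries of `Θ`, which lifts to `Δ` because the trees are copies of each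
other, and the extension splits.
-/

section Group

theorem semidirectProduct_lift_bijective {N Q G P : Type*} [Group N] [Group Q] [Group G] [Group P]
    {φ : Q →* MulAut N} {f : N →* G} {g : Q →* G}
    (h : ∀ q, f.comp (φ q).toMonoidHom = (MulAut.conj (g q)).toMonoidHom.comp f) {π : G →* P}
    (hf : Function.Injective f) (hπf : f.range = π.ker) (hπg : Function.Injective (π.comp g))
    (hπ : π.range ≤ (π.comp g).range) :
    Function.Bijective (SemidirectProduct.lift f g h) := by
  have hπ_lift (s : N ⋊[φ] Q) : π (SemidirectProduct.lift f g h s) = π (g s.right) := by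
    have hker : π (f s.left) = 1 := by
      rw [← MonoidHom.mem_ker, ← hπf]
      exact ⟨s.left, rfl⟩
    rw [← SemidirectProduct.inl_left_mul_inr_right s, map_mul, map_mul]
    simp [hker]
  constructor
  · rw [injective_iff_map_eq_one]
    intro s hs
    have hright : s.right = 1 := hπg <| by
      rw [MonoidHom.comp_apply, ← hπ_lift, hs, map_one, map_one]
    have hleft : f s.left = 1 := by
      rw [← hs, ← SemidirectProduct.inl_left_mul_inr_right s, hright]
      simp
    exact SemidirectProduct.ext (hf (hleft.trans f.map_one.symm)) hright
  · intro a
    obtain ⟨q, hq⟩ := hπ ⟨a, rfl⟩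
    obtain ⟨n, hn⟩ : a * (g q)⁻¹ ∈ f.range := by
      rw [hπf, MonoidHom.mem_ker, map_mul, map_inv, ← hq, MonoidHom.comp_apply, mul_inv_cancel]
    refine ⟨SemidirectProduct.inl n * SemidirectProduct.inr q, ?_⟩
    rw [map_mul, SemidirectProduct.lift_inl, SemidirectProduct.lift_inr, hn, inv_mul_cancel_right]

/-- The homomorphism from the Klein four-group sending its generators `(1, 0)` and `(0, 1)` to two
given commuting involutions. -/
def kleinHom {G : Type*} [Group G] (a b : G) (ha : a ^ 2 = 1) (hb : b ^ 2 = 1)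
    (hab : Commute a b) : K4 →* G where
  toFun q := a ^ q.toAdd.1.val * b ^ q.toAdd.2.val
  map_one' := by simp
  map_mul' q q' := by
    have hpow {c : G} (hc : c ^ 2 = 1) (i j : ZMod 2) :
        c ^ (i + j).val = c ^ i.val * c ^ j.val := by
      rw [ZMod.val_add, ← pow_add]
      exact (pow_eq_pow_mod _ hc).symm
    rw [toAdd_mul, Prod.fst_add, Prod.snd_add, hpow ha, hpow hb, mul_assoc, mul_assoc]
    congr 1
    rw [← mul_assoc, ← mul_assoc, (hab.pow_pow _ _).eq]

theorem kleinHom_injective {G : Type*} [Group G] {a b : G} (ha : a ^ 2 = 1) (hb : b ^ 2 = 1)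
    (hab : Commute a b) (ha_ne : a ≠ 1) (hb_ne : b ≠ 1) (hne : a ≠ b) :
    Function.Injective (kleinHom a b ha hb hab) := by
  rw [injective_iff_map_eq_one]
  have hmul : a * b ≠ 1 := fun h => hne <| by
    rw [eq_inv_of_mul_eq_one_left h, inv_eq_iff_mul_eq_one, ← sq, hb]
  rintro ⟨i, j⟩ hij
  change a ^ i.val * b ^ j.val = 1 at hij
  have hbit : ∀ k : ZMod 2, k = 0 ∨ k = 1 := by decide
  rcases hbit i with rfl | rfl <;> rcases hbit j with rfl | rfl
  · rfl
  · exact absurd (by simpa [ZMod.val_one] using hij) hb_ne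
  · exact absurd (by simpa [ZMod.val_one] using hij) ha_ne
  · exact absurd (by simpa [ZMod.val_one] using hij) hmul

end Group

section SimpleGraph

variable {V W : Type*} {G : SimpleGraph V} {G' : SimpleGraph W}

/-- Conjugation by a graph isomorphism, as an isomorphism of automorphism groups. -/
def autCongr (e : G ≃g G') : (G ≃g G) ≃* (G' ≃g G') where
  toFun φ := (e.symm.trans φ).trans e
  invFun φ := (e.trans φ).trans e.symm
  left_inv φ := by ext x; simp
  right_inv φ := by ext x; simp
  map_mul' φ ψ := by ext x; simp

theorem eq_of_isTree_of_adj_of_dist_le (hG : G.IsTree) {r w y y' : V} (h : G.Adj w y)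
    (h' : G.Adj w y') (hd : G.dist r y ≤ G.dist r w) (hd' : G.dist r y' ≤ G.dist r w) :
    y = y' := by
  have exists_path {z : V} (hz : G.Adj w z) (hzd : G.dist r z ≤ G.dist r w) :
      ∃ p : G.Walk w r, p.IsPath ∧ p.snd = z := by
    obtain ⟨p, hp⟩ := hG.connected.exists_walk_length_eq_dist z r
    refine ⟨Walk.cons hz p, Walk.isPath_of_length_eq_dist _ ?_, by simp⟩
    have := hG.dist_eq_dist_add_one_of_adj r hz
    rw [Walk.length_cons, hp, dist_comm, dist_comm (u := w)]
    lia
  obtain ⟨p, hp, rfl⟩ := exists_path h hd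
  obtain ⟨p', hp', rfl⟩ := exists_path h' hd'
  rw [(hG.existsUnique_path w r).unique hp hp']

theorem iso_apply_eq_of_neighborSet_subset_pair (σ : G ≃g G') {a : ℕ → V} {b : ℕ → W} {n : ℕ}
    (hadj : ∀ k < n, G.Adj (a k) (a (k + 1))) (hne : ∀ k, k + 2 ≤ n → a k ≠ a (k + 2))
    (hb : ∀ k, k + 2 ≤ n → G'.neighborSet (b (k + 1)) ⊆ {b k, b (k + 2)})
    (h0 : σ (a 0) = b 0) (h1 : σ (a 1) = b 1) : ∀ k ≤ n, σ (a k) = b k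
  | 0, _ => h0
  | 1, _ => h1
  | k + 2, hk => by
    have ih := iso_apply_eq_of_neighborSet_subset_pair σ hadj hne hb h0 h1 k (by lia)
    have ih_succ := iso_apply_eq_of_neighborSet_subset_pair σ hadj hne hb h0 h1 (k + 1) (by lia)
    have hmem : G'.Adj (b (k + 1)) (σ (a (k + 2))) := by
      rw [← ih_succ, σ.map_adj_iff]
      exact hadj (k + 1) (by lia)
    rcases hb k hk hmem with hback | hforward
    · rw [← ih] at hback
      exact absurd (σ.injective hback).symm (hne k hk)
    · exact hforward

theorem exists_autStab_of_embedding {V W : Type} {G : SimpleGraph V} {T : SimpleGraph W} {r : W}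
    (ι : T ↪g G) (φ : G ≃g G) (hφ : ∀ w, φ (ι w) ∈ Set.range ι)
    (hφ_symm : ∀ w, φ.symm (ι w) ∈ Set.range ι) (hr : φ (ι r) = ι r) :
    ∃ d : autStab T r, ∀ w, φ (ι w) = ι (d.1 w) := by
  choose f hf using hφ
  choose g hg using hφ_symm
  let d : T ≃g T :=
    { toFun := f
      invFun := g
      left_inv := fun w => ι.injective <| by rw [hg, hf, φ.symm_apply_apply]
      right_inv := fun w => ι.injective <| by rw [hf, hg, φ.apply_symm_apply]
      map_rel_iff' := fun {w w'} => by
        change T.Adj (f w) (f w') ↔ T.Adj w w'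
        rw [← ι.map_adj_iff, hf, hf, φ.map_adj_iff, ι.map_adj_iff] }
  exact ⟨⟨d, ι.injective ((hf r).trans hr)⟩, fun w => (hf w).symm⟩

end SimpleGraph

namespace attachTrees

variable {B ι : Type} {base : SimpleGraph B} {W : ι → Type} {T : ∀ i, SimpleGraph (W i)}
  {t : ∀ i, W i} {x : ι → B}

section Iso

variable {B' ι' : Type} {base' : SimpleGraph B'} {W' : ι' → Type} {T' : ∀ i, SimpleGraph (W' i)}
  {t' : ∀ i, W' i} {x' : ι' → B'}

/-- The isomorphism between graphs with attached trees induced by an isomorphism of the base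
graphs, a matching reindexing of the attachment points, and rooted isomorphisms of the trees. -/
def iso (σ : base ≃g base') (π : ι ≃ ι') (e : ∀ i, T i ≃g T' (π i))
    (he : ∀ i, e i (t i) = t' (π i)) (hx : ∀ i, x' (π i) = σ (x i)) :
    attachTrees base T t x ≃g attachTrees base' T' t' x' where
  toEquiv := Equiv.sumCongr σ.toEquiv <| Equiv.sigmaCongr π fun i =>
    (e i).toEquiv.subtypeEquiv fun w => by
      rw [← he]
      exact (e i).injective.ne_iff.symm
  map_rel_iff' := by
    have root_adj (i : ι) (w : W i) : (T' (π i)).Adj (t' (π i)) (e i w) ↔ (T i).Adj (t i) w := by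
      rw [← he, (e i).map_adj_iff]
    rintro (b | ⟨i, w⟩) (b' | ⟨j, w'⟩)
    · exact σ.map_adj_iff
    · exact and_congr ((hx j).symm ▸ σ.injective.eq_iff) (root_adj j w'.1)
    · exact and_congr ((hx i).symm ▸ σ.injective.eq_iff) (root_adj i w.1)
    · refine ⟨fun ⟨hπ, h⟩ => ?_, fun ⟨hij, h⟩ => ?_⟩
      · obtain rfl := π.injective hπ
        exact ⟨rfl, (e i).map_adj_iff.1 h⟩
      · subst hij
        exact ⟨rfl, (e i).map_adj_iff.2 h⟩

end Iso

/-- Automorphisms of the attached trees fixing their roots, acting on the whole graph. -/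
def fiberHom (base : SimpleGraph B) (T : ∀ i, SimpleGraph (W i)) (t : ∀ i, W i) (x : ι → B) :
    (∀ i, autStab (T i) (t i)) →* (attachTrees base T t x ≃g attachTrees base T t x) where
  toFun d := iso Iso.refl (Equiv.refl ι) (fun i => (d i).1) (fun i => (d i).2) fun _ => rfl
  map_one' := by ext (b | ⟨i, w⟩) <;> rfl
  map_mul' d d' := by ext (b | ⟨i, w⟩) <;> rfl

theorem fiberHom_injective : Function.Injective (fiberHom base T t x) := by
  intro d d' h
  funext i
  refine Subtype.ext (RelIso.ext fun w => ?_)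
  by_cases hw : w = t i
  · rw [hw]
    exact (d i).2.trans (d' i).2.symm
  · have himage := DFunLike.congr_fun h (.inr ⟨i, w, hw⟩)
    exact congrArg Subtype.val (eq_of_heq (Sigma.mk.inj (Sum.inr_injective himage)).2)

theorem iso_mul_fiberHom {σ : base ≃g base} {π : Equiv.Perm ι} {e : ∀ i, T i ≃g T (π i)}
    (he : ∀ i, e i (t i) = t (π i)) (hx : ∀ i, x (π i) = σ (x i))
    {d d' : ∀ i, autStab (T i) (t i)} (hd : ∀ i w, e i ((d i).1 w) = (d' (π i)).1 (e i w)) :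
    iso σ π e he hx * fiberHom base T t x d = fiberHom base T t x d' * iso σ π e he hx := by
  ext (b | ⟨i, w⟩)
  · rfl
  · exact congrArg (Sum.inr ∘ Sigma.mk (π i)) (Subtype.ext (hd i w))

/-- The vertex of the base at which the tree containing a given vertex is attached. -/
def basePoint (x : ι → B) : (B ⊕ Σ i, {w : W i // w ≠ t i}) → B :=
  Sum.elim id fun v => x v.1

/-- The distance from a vertex to the base. -/
noncomputable def depth (T : ∀ i, SimpleGraph (W i)) : (B ⊕ Σ i, {w : W i // w ≠ t i}) → ℕ :=
  Sum.elim (fun _ => 0) fun v => (T v.1).dist (t v.1) v.2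

open Classical in
/-- The `i`-th tree inside the whole graph; its root becomes the vertex `x i` of the base. -/
noncomputable def treeEmbedding (base : SimpleGraph B) (T : ∀ i, SimpleGraph (W i)) (t : ∀ i, W i)
    (x : ι → B) (i : ι) : T i ↪g attachTrees base T t x where
  toFun w := if hw : w = t i then .inl (x i) else .inr ⟨i, w, hw⟩
  inj' w w' h := by
    dsimp only at h
    split_ifs at h with hw hw'
    · rw [hw, hw']
    · simpa using h
  map_rel_iff' {w w'} := by
    change (attachTrees base T t x).Adj (dite _ _ _) (dite _ _ _) ↔ (T i).Adj w w'
    split_ifs with hw hw' hw'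
    · simp [hw, hw']
    · exact ⟨fun h => hw ▸ h.2, fun h => ⟨rfl, hw ▸ h⟩⟩
    · exact ⟨fun h => hw' ▸ h.2.symm, fun h => ⟨rfl, hw' ▸ h.symm⟩⟩
    · exact ⟨fun ⟨_, h⟩ => h, fun h => ⟨rfl, h⟩⟩

@[simp]
theorem treeEmbedding_root (i : ι) : treeEmbedding base T t x i (t i) = .inl (x i) :=
  dif_pos rfl

theorem treeEmbedding_of_ne {i : ι} {w : W i} (hw : w ≠ t i) :
    treeEmbedding base T t x i w = .inr ⟨i, w, hw⟩ :=
  dif_neg hw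

@[simp]
theorem basePoint_treeEmbedding (i : ι) (w : W i) :
    basePoint x (treeEmbedding base T t x i w) = x i := by
  by_cases hw : w = t i
  · rw [hw, treeEmbedding_root]
    rfl
  · rw [treeEmbedding_of_ne hw]
    rfl

@[simp]
theorem depth_treeEmbedding (i : ι) (w : W i) :
    depth T (treeEmbedding base T t x i w) = (T i).dist (t i) w := by
  by_cases hw : w = t i
  · rw [hw, treeEmbedding_root, dist_self]
    rfl
  · rw [treeEmbedding_of_ne hw]
    rfl

theorem mem_range_treeEmbedding_iff (hx : Function.Injective x) {i : ι}
    {v : B ⊕ Σ i, {w : W i // w ≠ t i}} :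
    v ∈ Set.range (treeEmbedding base T t x i) ↔ basePoint x v = x i := by
  refine ⟨?_, fun h => ?_⟩
  · rintro ⟨w, rfl⟩
    exact basePoint_treeEmbedding i w
  · obtain b | ⟨j, w⟩ := v
    · exact ⟨t i, (treeEmbedding_root i).trans (congrArg Sum.inl h.symm)⟩
    · obtain rfl := hx h
      exact ⟨w, treeEmbedding_of_ne w.2⟩

theorem exists_eq_treeEmbedding_of_adj_inr {i : ι} {w : {w : W i // w ≠ t i}}
    {v : B ⊕ Σ i, {w : W i // w ≠ t i}} (h : (attachTrees base T t x).Adj (.inr ⟨i, w⟩) v) :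
    ∃ w', v = treeEmbedding base T t x i w' ∧ (T i).Adj w w' := by
  obtain b | ⟨j, w'⟩ := v
  · obtain ⟨rfl, hadj⟩ := h
    exact ⟨t i, (treeEmbedding_root i).symm, hadj.symm⟩
  · obtain ⟨rfl, hadj⟩ := h
    exact ⟨w', (treeEmbedding_of_ne w'.2).symm, hadj⟩

theorem basePoint_eq_of_adj_inr {p : Σ i, {w : W i // w ≠ t i}}
    {v : B ⊕ Σ i, {w : W i // w ≠ t i}} (h : (attachTrees base T t x).Adj (.inr p) v) :
    basePoint x v = x p.1 := by
  obtain ⟨w, rfl, -⟩ := exists_eq_treeEmbedding_of_adj_inr h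
  exact basePoint_treeEmbedding p.1 w

theorem eq_of_adj_inr_of_depth_le (hT : ∀ i, (T i).IsTree) {p : Σ i, {w : W i // w ≠ t i}}
    {v v' : B ⊕ Σ i, {w : W i // w ≠ t i}} (h : (attachTrees base T t x).Adj (.inr p) v)
    (h' : (attachTrees base T t x).Adj (.inr p) v')
    (hd : depth T v ≤ depth (B := B) T (.inr p)) (hd' : depth T v' ≤ depth (B := B) T (.inr p)) :
    v = v' := by
  obtain ⟨i, w⟩ := p
  obtain ⟨y, rfl, hy⟩ := exists_eq_treeEmbedding_of_adj_inr h
  obtain ⟨y', rfl, hy'⟩ := exists_eq_treeEmbedding_of_adj_inr h'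
  rw [depth_treeEmbedding] at hd hd'
  rw [eq_of_isTree_of_adj_of_dist_le (hT i) hy hy' hd hd']

section Automorphism

variable [Finite B]

theorem exists_apply_inl_eq_inl (hT : ∀ i, (T i).IsTree)
    (hbase : ∀ b, (base.neighborSet b).Nontrivial)
    (φ : attachTrees base T t x ≃g attachTrees base T t x) (b : B) :
    ∃ b', φ (.inl b) = .inl b' := by
  have : Nonempty B := ⟨b⟩
  obtain ⟨c, hc⟩ := Finite.exists_max fun b => depth T (φ (.inl b))
  -- If `φ c` were off the base, two neighbours of `c` would be mapped no deeper than `c`, but a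
  -- vertex off the base has only one such neighbour.
  obtain ⟨c', hc'⟩ : ∃ c', φ (.inl c) = .inl c' := by
    rcases hφc : φ (.inl c) with c' | p
    · exact ⟨c', rfl⟩
    · obtain ⟨y, hy, y', hy', hne⟩ := hbase c
      have hadj {z : B} (hz : base.Adj c z) :
          (attachTrees base T t x).Adj (.inr p) (φ (.inl z)) := by
        rw [← hφc, φ.map_adj_iff]
        exact hz
      rw [hφc] at hc
      have himage := eq_of_adj_inr_of_depth_le hT (hadj hy) (hadj hy') (hc y) (hc y')
      exact absurd (Sum.inl_injective (φ.injective himage)) hne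
  have hdepth : depth T (φ (.inl b)) ≤ 0 := (hc b).trans_eq (congrArg (depth T) hc')
  rcases hφb : φ (.inl b) with b' | ⟨i, w⟩
  · exact ⟨b', rfl⟩
  · rw [hφb, Nat.le_zero] at hdepth
    exact absurd ((hT i).connected.dist_eq_zero_iff.1 hdepth).symm w.2

theorem apply_inl (hT : ∀ i, (T i).IsTree) (hbase : ∀ b, (base.neighborSet b).Nontrivial)
    (φ : attachTrees base T t x ≃g attachTrees base T t x) (b : B) :
    φ (.inl b) = .inl (basePoint x (φ (.inl b))) := by
  obtain ⟨b', hb'⟩ := exists_apply_inl_eq_inl hT hbase φ b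
  rw [hb']
  rfl

theorem apply_inr_ne_inl (hT : ∀ i, (T i).IsTree)
    (hbase : ∀ b, (base.neighborSet b).Nontrivial)
    (φ : attachTrees base T t x ≃g attachTrees base T t x)
    (p : Σ i, {w : W i // w ≠ t i}) (b : B) : φ (.inr p) ≠ .inl b := by
  intro h
  rw [← φ.eq_symm_apply, apply_inl hT hbase] at h
  exact Sum.inr_ne_inl h

theorem basePoint_apply_eq_of_adj (hT : ∀ i, (T i).IsTree)
    (hbase : ∀ b, (base.neighborSet b).Nontrivial)
    (φ : attachTrees base T t x ≃g attachTrees base T t x) {i : ι} {w w' : W i}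
    (h : (T i).Adj w w') :
    basePoint x (φ (treeEmbedding base T t x i w)) =
      basePoint x (φ (treeEmbedding base T t x i w')) := by
  have hadj : (attachTrees base T t x).Adj (φ (treeEmbedding base T t x i w))
      (φ (treeEmbedding base T t x i w')) := by
    rwa [φ.map_adj_iff, Embedding.map_adj_iff]
  have hoff_base {y : W i} (hy : y ≠ t i) :
      ∃ p, φ (treeEmbedding base T t x i y) = .inr p := by
    rw [treeEmbedding_of_ne hy]
    rcases hφy : φ (.inr ⟨i, y, hy⟩) with b | p
    · exact absurd hφy (apply_inr_ne_inl hT hbase φ _ b)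
    · exact ⟨p, rfl⟩
  by_cases hw : w = t i
  · obtain ⟨p, hp⟩ := hoff_base (hw ▸ h.ne')
    rw [hp] at hadj ⊢
    exact basePoint_eq_of_adj_inr hadj.symm
  · obtain ⟨p, hp⟩ := hoff_base hw
    rw [hp] at hadj ⊢
    exact (basePoint_eq_of_adj_inr hadj).symm

/-- The action of the automorphisms on the base: they preserve it when it is finite and each of
its vertices has two neighbours in it. -/
def baseHom (hT : ∀ i, (T i).IsTree) (hbase : ∀ b, (base.neighborSet b).Nontrivial) :
    (attachTrees base T t x ≃g attachTrees base T t x) →* (base ≃g base) where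
  toFun φ :=
    { toFun := fun b => basePoint x (φ (.inl b))
      invFun := fun b => basePoint x (φ.symm (.inl b))
      left_inv := fun b => by
        change basePoint x (φ.symm (.inl (basePoint x (φ (.inl b))))) = b
        rw [← apply_inl hT hbase φ, φ.symm_apply_apply]
        rfl
      right_inv := fun b => by
        change basePoint x (φ (.inl (basePoint x (φ.symm (.inl b))))) = b
        rw [← apply_inl hT hbase φ.symm, φ.apply_symm_apply]
        rfl
      map_rel_iff' := fun {b b'} => by
        change (attachTrees base T t x).Adj (.inl (basePoint x (φ (.inl b))))
          (.inl (basePoint x (φ (.inl b')))) ↔ base.Adj b b'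
        rw [← apply_inl hT hbase, ← apply_inl hT hbase, φ.map_adj_iff]
        rfl }
  map_one' := rfl
  map_mul' φ ψ := by
    ext b
    change basePoint x (φ (ψ (.inl b))) = basePoint x (φ (.inl (basePoint x (ψ (.inl b)))))
    rw [← apply_inl hT hbase]

variable (hT : ∀ i, (T i).IsTree) (hbase : ∀ b, (base.neighborSet b).Nontrivial)
  (φ : attachTrees base T t x ≃g attachTrees base T t x)

theorem apply_inl_eq_inl_baseHom (b : B) : φ (.inl b) = .inl (baseHom hT hbase φ b) :=
  apply_inl hT hbase φ b

theorem basePoint_apply_treeEmbedding (i : ι) (w : W i) :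
    basePoint x (φ (treeEmbedding base T t x i w)) = baseHom hT hbase φ (x i) := by
  have hwalk {y y' : W i} (p : (T i).Walk y y') :
      basePoint x (φ (treeEmbedding base T t x i y)) =
        basePoint x (φ (treeEmbedding base T t x i y')) := by
    induction p with
    | nil => rfl
    | cons h _ ih => exact (basePoint_apply_eq_of_adj hT hbase φ h).trans ih
  obtain ⟨p⟩ := (hT i).connected w (t i)
  rw [hwalk p, treeEmbedding_root]
  rfl

theorem range_fiberHom_eq_ker_baseHom (hx : Function.Injective x) :
    (fiberHom base T t x).range = (baseHom hT hbase).ker := by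
  refine le_antisymm ?_ fun φ hφ => ?_
  · rintro _ ⟨d, rfl⟩
    exact RelIso.ext fun _ => rfl
  · have hbase_eq (b : B) : baseHom hT hbase φ b = b := DFunLike.congr_fun hφ b
    have hpoint (ψ : attachTrees base T t x ≃g attachTrees base T t x)
        (hψ : ψ ∈ (baseHom hT hbase).ker) (i : ι) (w : W i) :
        ψ (treeEmbedding base T t x i w) ∈ Set.range (treeEmbedding base T t x i) := by
      rw [mem_range_treeEmbedding_iff hx, basePoint_apply_treeEmbedding hT hbase]
      exact DFunLike.congr_fun hψ (x i)
    have hroot (i : ι) :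
        φ (treeEmbedding base T t x i (t i)) = treeEmbedding base T t x i (t i) := by
      rw [treeEmbedding_root, apply_inl_eq_inl_baseHom hT hbase, hbase_eq]
    choose d hd using fun i => exists_autStab_of_embedding (treeEmbedding base T t x i) φ
      (hpoint φ hφ i) (hpoint φ⁻¹ (inv_mem hφ) i) (hroot i)
    refine ⟨d, RelIso.ext ?_⟩
    rintro (b | ⟨i, w⟩)
    · rw [apply_inl_eq_inl_baseHom hT hbase φ, hbase_eq]
      rfl
    · rw [← treeEmbedding_of_ne w.2, hd, treeEmbedding_of_ne w.2]
      exact (treeEmbedding_of_ne _).symm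

theorem exists_eq_baseHom_apply_of_nontrivial (i : ι) [Nontrivial (W i)] :
    ∃ j, x j = baseHom hT hbase φ (x i) := by
  obtain ⟨w, hw⟩ := exists_ne (t i)
  rcases hφw : φ (.inr ⟨i, w, hw⟩) with b | p
  · exact absurd hφw (apply_inr_ne_inl hT hbase φ _ b)
  · refine ⟨p.1, ?_⟩
    rw [← basePoint_apply_treeEmbedding hT hbase φ i w, treeEmbedding_of_ne hw, hφw]
    rfl

end Automorphism

end attachTrees

namespace theta

variable {p q r : ℕ}

section Path

/-- The lengths of the three paths between the hubs. -/
def length (p q r : ℕ) : Fin 3 → ℕ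
  | 0 => p + 1
  | 1 => q + 1
  | 2 => r + 1

theorem length_pos (c : Fin 3) : 0 < length p q r c := by
  fin_cases c <;> exact Nat.zero_lt_succ _

/-- The three paths of a theta graph, parametrized from `v = path p q r c 0` to
`u = path p q r c (length p q r c)` (and constant from there on). -/
def path (p q r : ℕ) (c : Fin 3) : ℕ → ThetaV p q r
  | 0 => .v
  | k + 1 =>
    match c with
    | 0 => if h : k < p then .x1 ⟨k, h⟩ else .u
    | 1 => if h : k < q then .x2 ⟨k, h⟩ else .u
    | 2 => if h : k < r then .x3 ⟨k, h⟩ else .u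

theorem path_zero_succ (i : Fin p) : path p q r 0 (i + 1) = .x1 i := by simp [path]

theorem path_one_succ (i : Fin q) : path p q r 1 (i + 1) = .x2 i := by simp [path]

theorem path_two_succ (i : Fin r) : path p q r 2 (i + 1) = .x3 i := by simp [path]

theorem path_length (c : Fin 3) : path p q r c (length p q r c) = .u := by
  fin_cases c <;> exact dif_neg (lt_irrefl _)

theorem adj_path_path_succ (c : Fin 3) {k : ℕ} (hk : k < length p q r c) :
    (theta p q r).Adj (path p q r c k) (path p q r c (k + 1)) := by
  fin_cases c <;> cases k <;> grind [length, path, theta]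

theorem neighborSet_path_succ_subset (c : Fin 3) {k : ℕ} (hk : k + 2 ≤ length p q r c) :
    (theta p q r).neighborSet (path p q r c (k + 1)) ⊆ {path p q r c k, path p q r c (k + 2)} := by
  intro w hadj
  rw [mem_neighborSet] at hadj
  fin_cases c <;> cases k <;> cases w <;> simp only [path] at hadj <;>
    split_ifs at hadj <;> simp only [theta] at hadj <;> grind [length, path]

theorem exists_eq_path_one_of_adj_v {w : ThetaV p q r} (h : (theta p q r).Adj .v w) :
    ∃ c, w = path p q r c 1 := by
  match w, h with
  | .u, h =>
    rcases h with rfl | rfl | rfl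
    exacts [⟨0, rfl⟩, ⟨1, rfl⟩, ⟨2, rfl⟩]
  | .x1 ⟨_, hi⟩, rfl => exact ⟨0, (path_zero_succ ⟨0, hi⟩).symm⟩
  | .x2 ⟨_, hi⟩, rfl => exact ⟨1, (path_one_succ ⟨0, hi⟩).symm⟩
  | .x3 ⟨_, hi⟩, rfl => exact ⟨2, (path_two_succ ⟨0, hi⟩).symm⟩

theorem eq_of_path_eq_path {c : Fin 3} {k k' : ℕ} (hk : k ≤ length p q r c)
    (hk' : k' ≤ length p q r c) (h : path p q r c k = path p q r c k') : k = k' := by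
  fin_cases c <;> cases k <;> cases k' <;> grind [length, path]

theorem path_ne_path_add_two {c : Fin 3} {k : ℕ} (hk : k + 2 ≤ length p q r c) :
    path p q r c k ≠ path p q r c (k + 2) := fun h => by
  have := eq_of_path_eq_path (by lia) hk h
  lia

theorem path_one_injective (hp : 0 < p) (hq : 0 < q) :
    Function.Injective fun c => path p q r c 1 := by
  intro c c' h
  fin_cases c <;> fin_cases c' <;> grind [path]

theorem exists_eq_path (w : ThetaV p q r) : ∃ c, ∃ k ≤ length p q r c, w = path p q r c k := by
  match w with
  | .u => exact ⟨0, _, le_rfl, (path_length 0).symm⟩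
  | .v => exact ⟨0, 0, Nat.zero_le _, rfl⟩
  | .x1 i => exact ⟨0, i + 1, Nat.le_succ_of_le i.2, (path_zero_succ i).symm⟩
  | .x2 i => exact ⟨1, i + 1, Nat.le_succ_of_le i.2, (path_one_succ i).symm⟩
  | .x3 i => exact ⟨2, i + 1, Nat.le_succ_of_le i.2, (path_two_succ i).symm⟩

theorem eq_v_or_eq_u_or_eq_path_succ (w : ThetaV p q r) :
    w = .v ∨ w = .u ∨ ∃ c k, k + 2 ≤ length p q r c ∧ w = path p q r c (k + 1) := by
  obtain ⟨c, k, hk, rfl⟩ := exists_eq_path w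
  rcases k with _ | k
  · exact .inl rfl
  · rcases hk.eq_or_lt with hk | hk
    · exact .inr (.inl (hk ▸ path_length c))
    · exact .inr (.inr ⟨c, k, hk, rfl⟩)

instance : Finite (ThetaV p q r) :=
  Finite.of_surjective
    (fun s : Σ c, Fin (length p q r c + 1) => path p q r s.1 s.2) fun w => by
      obtain ⟨c, k, hk, rfl⟩ := exists_eq_path w
      exact ⟨⟨c, k, Nat.lt_succ_of_le hk⟩, rfl⟩

end Path

section Iso

/-- The isomorphism exchanging the first two paths and fixing both hubs. -/
def swap (p q r : ℕ) : theta p q r ≃g theta q p r where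
  toFun
    | .u => .u
    | .v => .v
    | .x1 i => .x2 i
    | .x2 i => .x1 i
    | .x3 i => .x3 i
  invFun
    | .u => .u
    | .v => .v
    | .x1 i => .x2 i
    | .x2 i => .x1 i
    | .x3 i => .x3 i
  left_inv w := by cases w <;> rfl
  right_inv w := by cases w <;> rfl
  map_rel_iff' {w w'} := by cases w <;> cases w' <;> simp [theta] <;> tauto

/-- The automorphism exchanging the hubs and reversing each of the three paths. -/
def flip (p q r : ℕ) : theta p q r ≃g theta p q r where
  toFun
    | .u => .v
    | .v => .u
    | .x1 i => .x1 i.rev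
    | .x2 i => .x2 i.rev
    | .x3 i => .x3 i.rev
  invFun
    | .u => .v
    | .v => .u
    | .x1 i => .x1 i.rev
    | .x2 i => .x2 i.rev
    | .x3 i => .x3 i.rev
  left_inv w := by cases w <;> simp
  right_inv w := by cases w <;> simp
  map_rel_iff' {w w'} := by cases w <;> cases w' <;> simp [theta] <;> lia

theorem swap_path (c : Fin 3) (k : ℕ) :
    swap p q r (path p q r c k) = path q p r (Equiv.swap 0 1 c) k := by
  match c, k with
  | _, 0 => rfl
  | 0, k + 1 => exact apply_dite (swap p q r) _ _ _
  | 1, k + 1 => exact apply_dite (swap p q r) _ _ _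
  | 2, k + 1 => exact apply_dite (swap p q r) _ _ _

theorem swap_sq : swap p p r ^ 2 = 1 := by
  ext w
  cases w <;> rfl

theorem flip_sq : flip p q r ^ 2 = 1 := (flip p q r).self_trans_symm

theorem swap_commute_flip : Commute (swap p p r) (flip p p r) := by
  ext w
  cases w <;> rfl

/-- The action of the Klein four-group on a theta graph with two paths of equal length: `(1, 0)`
exchanges these two paths and `(0, 1)` exchanges the hubs. -/
def symm (p r : ℕ) : K4 →* (theta p p r ≃g theta p p r) :=
  kleinHom (swap p p r) (flip p p r) swap_sq flip_sq swap_commute_flip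

theorem swap_mem_range_symm : swap p p r ∈ (symm p r).range :=
  ⟨.ofAdd (1, 0), by simp [symm, kleinHom, ZMod.val_one]⟩

theorem flip_mem_range_symm : flip p p r ∈ (symm p r).range :=
  ⟨.ofAdd (0, 1), by simp [symm, kleinHom, ZMod.val_one]⟩

theorem symm_injective (hp : 0 < p) : Function.Injective (symm p r) := by
  refine kleinHom_injective swap_sq flip_sq swap_commute_flip (fun h => ?_) (fun h => ?_)
    fun h => ?_
  · cases DFunLike.congr_fun h (.x1 ⟨0, hp⟩)
  · cases DFunLike.congr_fun h .v
  · cases DFunLike.congr_fun h .v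

end Iso

section Automorphism

theorem neighborSet_nontrivial (hp : 0 < p) (hq : 0 < q) (w : ThetaV p q r) :
    ((theta p q r).neighborSet w).Nontrivial := by
  have hv : ((theta p q r).neighborSet .v).Nontrivial :=
    ⟨_, adj_path_path_succ 0 (length_pos 0), _, adj_path_path_succ 1 (length_pos 1),
      fun h => zero_ne_one (path_one_injective hp hq h)⟩
  obtain rfl | rfl | ⟨c, k, hk, rfl⟩ := eq_v_or_eq_u_or_eq_path_succ w
  · exact hv
  · obtain ⟨y, hy, y', hy', hne⟩ := hv
    exact ⟨flip p q r y, (flip p q r).map_adj_iff.2 hy, flip p q r y',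
      (flip p q r).map_adj_iff.2 hy', (flip p q r).injective.ne hne⟩
  · exact ⟨_, (adj_path_path_succ c (by lia)).symm, _, adj_path_path_succ c (by lia),
      path_ne_path_add_two hk⟩

theorem apply_v_eq_v_or_eq_u (hp : 0 < p) (hq : 0 < q) (σ : theta p q r ≃g theta p q r) :
    σ .v = .v ∨ σ .v = .u := by
  obtain hv | hu | ⟨c, k, hk, hσv⟩ := eq_v_or_eq_u_or_eq_path_succ (σ .v)
  · exact .inl hv
  · exact .inr hu
  -- The three neighbours of `v` cannot be mapped injectively to the two neighbours of `σ v`.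
  · have hmem (c' : Fin 3) :
        σ (path p q r c' 1) ∈ ({path p q r c k, path p q r c (k + 2)} : Finset _) := by
      rw [← Finset.mem_coe, Finset.coe_pair]
      apply neighborSet_path_succ_subset c hk
      rw [← hσv, mem_neighborSet, σ.map_adj_iff]
      exact adj_path_path_succ c' (length_pos c')
    obtain ⟨c₁, -, c₂, -, hne, heq⟩ := Finset.exists_ne_map_eq_of_card_lt_of_maps_to
      (s := Finset.univ) (Finset.card_le_two.trans_lt (by simp)) fun c' _ => hmem c'
    exact absurd (path_one_injective hp hq (σ.injective heq)) hne

theorem exists_apply_path_eq_path (σ : theta p q r ≃g theta p q r) (hv : σ .v = .v) (hu : σ .u = .u)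
    (c : Fin 3) : ∃ c', length p q r c = length p q r c' ∧
      ∀ k ≤ length p q r c, σ (path p q r c k) = path p q r c' k := by
  obtain ⟨c', hc'⟩ : ∃ c', σ (path p q r c 1) = path p q r c' 1 := by
    apply exists_eq_path_one_of_adj_v
    rw [← hv, σ.map_adj_iff]
    exact adj_path_path_succ c (length_pos c)
  have htrace : ∀ k ≤ min (length p q r c) (length p q r c'),
      σ (path p q r c k) = path p q r c' k :=
    iso_apply_eq_of_neighborSet_subset_pair σ (fun k hk => adj_path_path_succ c (by lia))
      (fun k hk => path_ne_path_add_two (by lia))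
      (fun k hk => neighborSet_path_succ_subset c' (by lia)) hv hc'
  have hlength : length p q r c = length p q r c' := by
    rcases le_total (length p q r c) (length p q r c') with hle | hle
    · refine eq_of_path_eq_path hle le_rfl ?_
      rw [← htrace _ (by lia), path_length, path_length, hu]
    · refine (eq_of_path_eq_path hle le_rfl (σ.injective ?_)).symm
      rw [htrace _ (by lia), path_length, path_length, hu]
  exact ⟨c', hlength, fun k hk => htrace k (by lia)⟩

theorem eq_one_or_eq_swap (hp : 0 < p) {σ : theta p p r ≃g theta p p r} (hv : σ .v = .v)
    (hu : σ .u = .u) (hσ : r = p → ∃ k, ∀ n, σ (.x1 k) ≠ .x3 n ∧ σ (.x2 k) ≠ .x3 n) :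
    σ = 1 ∨ σ = swap p p r := by
  choose τ hlength hτ using exists_apply_path_eq_path σ hv hu
  have hτ_inj : Function.Injective τ := fun c c' h => path_one_injective hp hp <| σ.injective <| by
    simp only [hτ c 1 (length_pos c), hτ c' 1 (length_pos c'), h]
  have hrp {c : Fin 3} (h : τ c = 2) (hc : length p p r c = p + 1) : r = p := by
    have hlength_c := hlength c
    rw [h, hc] at hlength_c
    exact (Nat.succ_injective hlength_c).symm
  have hτ_zero : τ 0 ≠ 2 := fun h => by
    obtain ⟨k, hk⟩ := hσ (hrp h rfl)
    obtain rfl := hrp h rfl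
    refine (hk k).1 ?_
    rw [← path_zero_succ, hτ 0 _ (Nat.le_succ_of_le k.2), h, path_two_succ]
  have hτ_one : τ 1 ≠ 2 := fun h => by
    obtain ⟨k, hk⟩ := hσ (hrp h rfl)
    obtain rfl := hrp h rfl
    refine (hk k).2 ?_
    rw [← path_one_succ, hτ 1 _ (Nat.le_succ_of_le k.2), h, path_two_succ]
  have hperm : ∀ τ : Fin 3 → Fin 3, Function.Injective τ → τ 0 ≠ 2 → τ 1 ≠ 2 →
      τ = id ∨ τ = Equiv.swap 0 1 := by decide
  refine (hperm τ hτ_inj hτ_zero hτ_one).imp (fun h => ?_) fun h => ?_ <;>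
  · ext w
    obtain ⟨c, k, hk, rfl⟩ := exists_eq_path w
    simp only [hτ c k hk, h, swap_path, id, RelIso.one_apply]

theorem mem_range_symm_of_apply_v_eq_v (hp : 0 < p) {σ : theta p p r ≃g theta p p r}
    (hv : σ .v = .v) (hσ : r = p → ∃ k, ∀ n, σ (.x1 k) ≠ .x3 n ∧ σ (.x2 k) ≠ .x3 n) :
    σ ∈ (symm p r).range := by
  have hu : σ .u = .u := by
    refine (apply_v_eq_v_or_eq_u hp hp (σ * flip p p r)).resolve_left fun h => ?_
    cases σ.injective (h.trans hv.symm)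
  rcases eq_one_or_eq_swap hp hv hu hσ with rfl | rfl
  · exact one_mem _
  · exact swap_mem_range_symm

theorem mem_range_symm (hp : 0 < p) {σ : theta p p r ≃g theta p p r}
    (hσ : r = p → ∃ k, ∀ n, σ (.x1 k) ≠ .x3 n ∧ σ (.x2 k) ≠ .x3 n) :
    σ ∈ (symm p r).range := by
  rcases apply_v_eq_v_or_eq_u hp hp σ with hv | hu
  · exact mem_range_symm_of_apply_v_eq_v hp hv hσ
  · have hflip {w : ThetaV p p r} (hw : ∀ n, w ≠ .x3 n) (n : Fin r) : flip p p r w ≠ .x3 n :=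
      fun h => hw n.rev ((flip p p r).symm_apply_eq.2 h.symm).symm
    rw [← Subgroup.mul_mem_cancel_left _ flip_mem_range_symm]
    refine mem_range_symm_of_apply_v_eq_v hp (congrArg (flip p p r) hu) fun hrp => ?_
    obtain ⟨k, hk⟩ := hσ hrp
    exact ⟨k, fun n => ⟨hflip (fun n => (hk n).1) n, hflip (fun n => (hk n).2) n⟩⟩

end Automorphism

end theta

namespace bicyclic

section Index

/-- The index set of the eight attached trees, written so that the Klein four-group acts on it by
translations. -/
abbrev Index : Type := (ZMod 2 × ZMod 2) ⊕ ZMod 2 ⊕ ZMod 2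

/-- The numbering of the eight trees: `(i, j)` stands for `2 * i + j`. -/
def indexEquiv : Index ≃ Stmt2Index :=
  Equiv.sumCongr finProdFinEquiv (Equiv.refl _)

/-- The action of the Klein four-group on the indices of the attached trees. -/
def indexPerm : K4 →* Equiv.Perm Index :=
  (Equiv.Perm.sumCongrHom _ _).comp <| (transPermHom (ZMod 2 × ZMod 2)).prod <|
    (Equiv.Perm.sumCongrHom _ _).comp <|
      ((transPermHom (ZMod 2)).comp fstK).prod ((transPermHom (ZMod 2)).comp sndK)

/-- The attachment points of the eight trees on the theta graph. -/
def point (m : ℕ) (i : Index) : ThetaV 3 3 m :=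
  stmt2x m (indexEquiv i)

theorem point_injective (m : ℕ) : Function.Injective (point m) := by
  have hx : Function.Injective (stmt2x m) := by
    rintro (i | i | i) (j | j | j) h <;> fin_cases i <;> fin_cases j <;>
      first | rfl | simp [stmt2x] at h
  exact hx.comp indexEquiv.injective

theorem point_ne_x3 {m : ℕ} (i : Index) (n : Fin m) : point m i ≠ .x3 n := by
  have hx (i : Stmt2Index) : stmt2x m i ≠ .x3 n := by
    rcases i with i | i | i <;> fin_cases i <;> nofun
  exact hx (indexEquiv i)

theorem point_indexPerm (m : ℕ) (q : K4) (i : Index) :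
    point m (indexPerm q i) = theta.symm 3 m q (point m i) := by
  obtain ⟨a, b⟩ := q
  rcases i with ⟨i, j⟩ | i | j
  · fin_cases a <;> fin_cases b <;> fin_cases i <;> fin_cases j <;> rfl
  · fin_cases a <;> fin_cases b <;> fin_cases i <;> rfl
  · fin_cases a <;> fin_cases b <;> fin_cases j <;> rfl

end Index

section Family

/-- The vertex types of the eight trees. -/
def treeType (A B C : Type) : Index → Type
  | .inl _ => A
  | .inr (.inl _) => B
  | .inr (.inr _) => C

variable {A B C : Type}

/-- The family consisting of four copies of a first tree, two of a second and two of a third. -/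
def tree (S : SimpleGraph A) (U : SimpleGraph B) (X : SimpleGraph C) :
    ∀ i, SimpleGraph (treeType A B C i)
  | .inl _ => S
  | .inr (.inl _) => U
  | .inr (.inr _) => X

/-- The roots of the eight trees. -/
def root (s : A) (u : B) (x : C) : ∀ i, treeType A B C i
  | .inl _ => s
  | .inr (.inl _) => u
  | .inr (.inr _) => x

end Family

variable {m : ℕ} {A B C : Type} {S : SimpleGraph A} {U : SimpleGraph B} {X : SimpleGraph C}
  {s : A} {u : B} {x : C}

variable (m s u x) in
/-- The vertices of `graph`. -/
abbrev Vertex : Type := ThetaV 3 3 m ⊕ Σ i, {w : treeType A B C i // w ≠ root s u x i}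

variable (m S U X s u x) in
/-- The graph of the theorem in the case where isomorphic trees are equal. -/
abbrev graph : SimpleGraph (Vertex m s u x) :=
  attachTrees (theta 3 3 m) (tree S U X) (root s u x) (point m)

theorem tree_isTree (hS : S.IsTree) (hU : U.IsTree) (hX : X.IsTree) : ∀ i, (tree S U X i).IsTree
  | .inl _ => hS
  | .inr (.inl _) => hU
  | .inr (.inr _) => hX

variable (S U X s u x) in
/-- The product `D⁴ × H² × K²` as the group of families of rooted automorphisms of the trees. -/
def familyEquiv :
    (ZMod 2 × ZMod 2 → autStab S s) × (ZMod 2 → autStab U u) × (ZMod 2 → autStab X x) ≃*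
      ∀ i, autStab (tree S U X i) (root s u x i) where
  toFun d
    | .inl j => d.1 j
    | .inr (.inl j) => d.2.1 j
    | .inr (.inr j) => d.2.2 j
  invFun d := (fun j => d (.inl j), fun j => d (.inr (.inl j)), fun j => d (.inr (.inr j)))
  left_inv _ := rfl
  right_inv d := by funext i; rcases i with j | j | j <;> rfl
  map_mul' d d' := by funext i; rcases i with j | j | j <;> rfl

variable (m S U X s u x) in
/-- The action of the tree automorphisms on the graph. -/
def treeHom :
    (ZMod 2 × ZMod 2 → autStab S s) × (ZMod 2 → autStab U u) × (ZMod 2 → autStab X x) →*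
      (graph m S U X s u x ≃g graph m S U X s u x) :=
  (attachTrees.fiberHom _ _ _ _).comp (familyEquiv S U X s u x).toMonoidHom

/-- Copies of the same tree, identified by the identity. -/
def treeIso (q : K4) : ∀ i, tree S U X i ≃g tree S U X (indexPerm q i)
  | .inl _ => Iso.refl
  | .inr (.inl _) => Iso.refl
  | .inr (.inr _) => Iso.refl

theorem treeIso_root (q : K4) :
    ∀ i, treeIso (S := S) (U := U) (X := X) q i (root s u x i) = root s u x (indexPerm q i)
  | .inl _ => rfl
  | .inr (.inl _) => rfl
  | .inr (.inr _) => rfl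

variable (m S U X s u x) in
/-- The action of the Klein four-group on the graph by the symmetries of the theta graph. -/
def symmHom : K4 →* (graph m S U X s u x ≃g graph m S U X s u x) where
  toFun q := attachTrees.iso (theta.symm 3 m q) (indexPerm q) (treeIso q) (treeIso_root q)
    (point_indexPerm m q)
  map_one' := by
    ext (b | ⟨j | j | j, w⟩)
    · exact congrArg Sum.inl (DFunLike.congr_fun (map_one (theta.symm 3 m)) b)
    · exact congrArg (fun k => (.inr ⟨.inl k, w⟩ : Vertex m s u x)) (one_smul K4 j)
    · exact congrArg (fun k => (.inr ⟨.inr (.inl k), w⟩ : Vertex m s u x)) (zero_add j)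
    · exact congrArg (fun k => (.inr ⟨.inr (.inr k), w⟩ : Vertex m s u x)) (zero_add j)
  map_mul' q q' := by
    ext (b | ⟨j | j | j, w⟩)
    · exact congrArg Sum.inl (DFunLike.congr_fun (map_mul (theta.symm 3 m) q q') b)
    · exact congrArg (fun k => (.inr ⟨.inl k, w⟩ : Vertex m s u x)) (mul_smul q q' j)
    · exact congrArg (fun k => (.inr ⟨.inr (.inl k), w⟩ : Vertex m s u x)) (add_assoc q.1 q'.1 j)
    · exact congrArg (fun k => (.inr ⟨.inr (.inr k), w⟩ : Vertex m s u x)) (add_assoc q.2 q'.2 j)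

theorem symmHom_mul_treeHom (q : K4)
    (d : (ZMod 2 × ZMod 2 → autStab S s) × (ZMod 2 → autStab U u) × (ZMod 2 → autStab X x)) :
    symmHom m S U X s u x q * treeHom m S U X s u x d =
      treeHom m S U X s u x (B2act _ _ _ q d) * symmHom m S U X s u x q := by
  refine attachTrees.iso_mul_fiberHom (treeIso_root q) (point_indexPerm m q) ?_
  rintro (j | j | j) w
  · change (d.1 j).1 w = (d.1 ((transPermHom _ q).symm (transPermHom _ q j))).1 w
    rw [Equiv.symm_apply_apply]
  · change (d.2.1 j).1 w =
      (d.2.1 ((transPermHom _ (fstK q)).symm (transPermHom _ (fstK q) j))).1 w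
    rw [Equiv.symm_apply_apply]
  · change (d.2.2 j).1 w =
      (d.2.2 ((transPermHom _ (sndK q)).symm (transPermHom _ (sndK q) j))).1 w
    rw [Equiv.symm_apply_apply]

theorem baseHom_comp_symmHom (hS : S.IsTree) (hU : U.IsTree) (hX : X.IsTree)
    (hbase : ∀ b, ((theta 3 3 m).neighborSet b).Nontrivial) :
    (attachTrees.baseHom (tree_isTree hS hU hX) hbase).comp (symmHom m S U X s u x) =
      theta.symm 3 m :=
  rfl

theorem exists_baseHom_apply_ne_x3 (hS : S.IsTree) (hU : U.IsTree) (hX : X.IsTree)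
    (hbase : ∀ b, ((theta 3 3 m).neighborSet b).Nontrivial)
    (hside : m ≠ 3 ∨ Nontrivial A ∨ Nontrivial B)
    (φ : graph m S U X s u x ≃g graph m S U X s u x) (hm : m = 3) :
    ∃ k, ∀ n, attachTrees.baseHom (tree_isTree hS hU hX) hbase φ (.x1 k) ≠ .x3 n ∧
      attachTrees.baseHom (tree_isTree hS hU hX) hbase φ (.x2 k) ≠ .x3 n := by
  have hpoint (i : Index) (hi : Nontrivial (treeType A B C i)) (n : Fin m) :
      attachTrees.baseHom (tree_isTree hS hU hX) hbase φ (point m i) ≠ .x3 n := by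
    obtain ⟨j, hj⟩ :=
      attachTrees.exists_eq_baseHom_apply_of_nontrivial (tree_isTree hS hU hX) hbase φ i
    exact hj ▸ point_ne_x3 j n
  obtain hA | hB := hside.resolve_left (not_not_intro hm)
  · exact ⟨0, fun n => ⟨hpoint (.inl (0, 0)) hA n, hpoint (.inl (1, 0)) hA n⟩⟩
  · exact ⟨1, fun n => ⟨hpoint (.inr (.inl 0)) hB n, hpoint (.inr (.inl 1)) hB n⟩⟩

theorem nonempty_autGraph_mulEquiv (hS : S.IsTree) (hU : U.IsTree) (hX : X.IsTree)
    (hside : m ≠ 3 ∨ Nontrivial A ∨ Nontrivial B) :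
    Nonempty ((graph m S U X s u x ≃g graph m S U X s u x) ≃*
      B2group (autStab S s) (autStab U u) (autStab X x)) := by
  have hbase := theta.neighborSet_nontrivial (r := m) three_pos three_pos
  have hconj (q : K4) : (treeHom m S U X s u x).comp (B2act _ _ _ q).toMonoidHom =
      (MulAut.conj (symmHom m S U X s u x q)).toMonoidHom.comp (treeHom m S U X s u x) :=
    MonoidHom.ext fun d => eq_mul_inv_of_mul_eq (symmHom_mul_treeHom q d).symm
  have hker : (treeHom m S U X s u x).range =
      (attachTrees.baseHom (tree_isTree hS hU hX) hbase).ker := by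
    rw [← attachTrees.range_fiberHom_eq_ker_baseHom _ _ (point_injective m)]
    rw [treeHom, MonoidHom.range_comp, MonoidHom.range_eq_top.2 (MulEquiv.surjective _),
      MonoidHom.range_eq_map]
  refine ⟨(MulEquiv.ofBijective _ <| semidirectProduct_lift_bijective hconj
    (attachTrees.fiberHom_injective.comp (familyEquiv S U X s u x).injective) hker ?_ ?_).symm⟩
  · rw [baseHom_comp_symmHom hS hU hX hbase]
    exact theta.symm_injective three_pos
  · rintro _ ⟨φ, rfl⟩
    rw [baseHom_comp_symmHom hS hU hX hbase]
    exact theta.mem_range_symm three_pos (exists_baseHom_apply_ne_x3 hS hU hX hbase hside φ)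

variable {WT : Fin 4 → Type} {WΘ WΥ : Fin 2 → Type} {TT : ∀ j, SimpleGraph (WT j)}
  {TΘ : ∀ j, SimpleGraph (WΘ j)} {TΥ : ∀ j, SimpleGraph (WΥ j)} {tT : ∀ j, WT j}
  {tΘ : ∀ j, WΘ j} {tΥ : ∀ j, WΥ j}

theorem nonempty_graph_iso_stmt2Graph (hT : ∀ j, ∃ e : TT 0 ≃g TT j, e (tT 0) = tT j)
    (hΘ : ∀ j, ∃ e : TΘ 0 ≃g TΘ j, e (tΘ 0) = tΘ j)
    (hΥ : ∀ j, ∃ e : TΥ 0 ≃g TΥ j, e (tΥ 0) = tΥ j) :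
    Nonempty (graph m (TT 0) (TΘ 0) (TΥ 0) (tT 0) (tΘ 0) (tΥ 0) ≃g
      stmt2Graph m TT TΘ TΥ tT tΘ tΥ) := by
  have htree (i : Index) : ∃ e : tree (TT 0) (TΘ 0) (TΥ 0) i ≃g stmt2T TT TΘ TΥ (indexEquiv i),
      e (root (tT 0) (tΘ 0) (tΥ 0) i) = stmt2root tT tΘ tΥ (indexEquiv i) := by
    rcases i with i | i | i
    · exact hT (finProdFinEquiv i)
    · exact hΘ i
    · exact hΥ i
  choose e he using htree
  exact ⟨attachTrees.iso Iso.refl indexEquiv e he fun _ => rfl⟩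

end bicyclic

theorem aut_bicyclic_first_type_general
    (m : ℕ) {WT : Fin 4 → Type} {WΘ WΥ : Fin 2 → Type}
    (TT : ∀ j, SimpleGraph (WT j)) (TΘ : ∀ j, SimpleGraph (WΘ j))
    (TΥ : ∀ j, SimpleGraph (WΥ j))
    (tT : ∀ j, WT j) (tΘ : ∀ j, WΘ j) (tΥ : ∀ j, WΥ j)
    (hTtree : (TT 0).IsTree) (hΘtree : (TΘ 0).IsTree) (hΥtree : (TΥ 0).IsTree)
    (hTiso : ∀ j, ∃ e : TT 0 ≃g TT j, e (tT 0) = tT j)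
    (hΘiso : ∃ e : TΘ 0 ≃g TΘ 1, e (tΘ 0) = tΘ 1)
    (hΥiso : ∃ e : TΥ 0 ≃g TΥ 1, e (tΥ 0) = tΥ 1)
    (hside : m + 1 ≠ 4 ∨ Nontrivial (WT 0) ∨ Nontrivial (WΘ 0)) :
    Nonempty ((stmt2Graph m TT TΘ TΥ tT tΘ tΥ ≃g stmt2Graph m TT TΘ TΥ tT tΘ tΥ) ≃*
      B2group ↥(autStab (TT 0) (tT 0)) ↥(autStab (TΘ 0) (tΘ 0)) ↥(autStab (TΥ 0) (tΥ 0))) := by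
  obtain ⟨e⟩ := bicyclic.nonempty_graph_iso_stmt2Graph (m := m) hTiso
    (Fin.forall_fin_two.2 ⟨⟨Iso.refl, rfl⟩, hΘiso⟩) (Fin.forall_fin_two.2 ⟨⟨Iso.refl, rfl⟩, hΥiso⟩)
  obtain ⟨f⟩ := bicyclic.nonempty_autGraph_mulEquiv (s := tT 0) (u := tΘ 0) (x := tΥ 0)
    hTtree hΘtree hΥtree (hside.imp_left (mt (congrArg (· + 1))))
  exact ⟨(autCongr e).symm.trans f⟩

/-- Lemma 2.2. With all the trees finite, `T₁ ≅ T₂ ≅ T₃ ≅ T₄`,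
`Θ₅ ≅ Θ₆` and `Υ₁ ≅ Υ₂` as rooted trees, and assuming `ℓ = m + 1 ≠ 4` or one of `T₁`, `Θ₅`
has more than one vertex, the automorphism group of the bicyclic graph `Δ` is isomorphic to
`(D⁴ × H² × K²) ⋊ (Z₂ × Z₂)` where `D = Aut(T₁)_root`, `H = Aut(Θ₅)_root`,
`K = Aut(Υ₁)_root`, and `Z₂ × Z₂` acts as described in `B2act`. -/
theorem aut_bicyclic_first_type
    (m : ℕ) {WT : Fin 4 → Type} {WΘ WΥ : Fin 2 → Type}
    [∀ j, Fintype (WT j)] [∀ j, Fintype (WΘ j)] [∀ j, Fintype (WΥ j)]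
    (TT : ∀ j, SimpleGraph (WT j)) (TΘ : ∀ j, SimpleGraph (WΘ j))
    (TΥ : ∀ j, SimpleGraph (WΥ j))
    (tT : ∀ j, WT j) (tΘ : ∀ j, WΘ j) (tΥ : ∀ j, WΥ j)
    (hTtree : ∀ j, (TT j).IsTree) (hΘtree : ∀ j, (TΘ j).IsTree)
    (hΥtree : ∀ j, (TΥ j).IsTree)
    (hTiso : ∀ j j', ∃ e : TT j ≃g TT j', e (tT j) = tT j')
    (hΘiso : ∃ e : TΘ 0 ≃g TΘ 1, e (tΘ 0) = tΘ 1)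
    (hΥiso : ∃ e : TΥ 0 ≃g TΥ 1, e (tΥ 0) = tΥ 1)
    (hside : m + 1 ≠ 4 ∨ Nontrivial (WT 0) ∨ Nontrivial (WΘ 0)) :
    Nonempty ((stmt2Graph m TT TΘ TΥ tT tΘ tΥ ≃g stmt2Graph m TT TΘ TΥ tT tΘ tΥ) ≃*
      B2group ↥(autStab (TT 0) (tT 0)) ↥(autStab (TΘ 0) (tΘ 0)) ↥(autStab (TΥ 0) (tΥ 0))) :=
  aut_bicyclic_first_type_general m TT TΘ TΥ tT tΘ tΥ (hTtree 0) (hΘtree 0) (hΥtree 0) (hTiso 0)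
    hΘiso hΥiso hside
end

section
/- For every finite tree T there exists a bicyclic graph Δ such that Aut(Δ) ≅ Aut(T). Consequently, every group in Jordan's class 𝒯 is the automorphism group of a bicyclic graph. -/
open SimpleGraph

/-- Jordan's class `𝒯`: the smallest isomorphism-closed class of groups containing the
trivial group and closed under direct products of members and wreath products `G ≀ Sₙ`
(with `Sₙ` permuting the `n` coordinates of `Gⁿ`) for members `G` and `n ≥ 2`. -/
inductive JordanT : ∀ (G : Type) [Group G], Prop where
  | triv : JordanT PUnit
  | congr {G H : Type} [Group G] [Group H] : JordanT G → (G ≃* H) → JordanT H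
  | prod {G H : Type} [Group G] [Group H] : JordanT G → JordanT H → JordanT (G × H)
  | wreath {G : Type} [Group G] (n : ℕ) (hn : 2 ≤ n) :
      JordanT G → JordanT ((Fin n → G) ⋊[permHom (Fin n) G] Equiv.Perm (Fin n))

/-- A graph is bicyclic if it is connected and its number of edges exceeds its number of
vertices by exactly one (i.e. it has cyclomatic number 2). -/
def SimpleGraph.IsBicyclic {V : Type} (G : SimpleGraph V) : Prop :=
  G.Connected ∧ G.edgeSet.ncard = Nat.card V + 1

/-!
Both halves reduce to rooted trees. A group that is the automorphism group of a finite rooted tree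
`(T, r)` is the automorphism group of a bicyclic graph: hang `T` by `r` on the common vertex of two
triangles which carry pendant paths of different lengths. The common vertex is the only one lying in
two triangles, hence fixed by all automorphisms, and what is left besides `T` is rigid.

Coning off a forest with one marked vertex in each component yields a rooted tree with the same
automorphisms. Disjoint unions of two rooted trees, first made of different sizes if necessary, thus
realize direct products, and disjoint unions of copies of one rooted tree realize wreath products.
For an unrooted tree, the centre is a vertex or an edge and is preserved by all automorphisms;
deleting that edge, if it is one, and coning over the centre gives a rooted tree.
-/

open scoped Pointwise

namespace TreeAut

section MarkedAut

variable {V : Type*} {G : SimpleGraph V} {S : Set V}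

/-- The automorphisms of `G` preserving the vertex set `S` of marked vertices. A rooted graph is the
case `S = {r}`. -/
abbrev markedAut (G : SimpleGraph V) (S : Set V) : Subgroup (G ≃g G) :=
  MulAction.stabilizer (G ≃g G) S

lemma mem_markedAut {φ : G ≃g G} : φ ∈ markedAut G S ↔ ∀ v, φ v ∈ S ↔ v ∈ S :=
  MulAction.mem_stabilizer_set

lemma mem_markedAut_singleton {φ : G ≃g G} {r : V} : φ ∈ markedAut G {r} ↔ φ r = r := by
  rw [markedAut, MulAction.stabilizer_singleton, MulAction.mem_stabilizer_iff, RelIso.smul_def]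

/-- The identification of the full automorphism group with the marked one when every automorphism
preserves the marks. -/
def markedAutEquivOfForallMem (h : ∀ φ : G ≃g G, φ ∈ markedAut G S) :
    (G ≃g G) ≃* markedAut G S :=
  (Subgroup.topEquiv.symm).trans (MulEquiv.subgroupCongr ((Subgroup.eq_top_iff' _).2 h).symm)

end MarkedAut

section Cone

variable {W : Type*} {H : SimpleGraph W} {S : Set W}

/-- The cone over a marked graph: a new apex `none` is joined to every marked vertex. A forest with
one mark in each component becomes in this way a tree rooted at the apex. -/
def cone (H : SimpleGraph W) (S : Set W) : SimpleGraph (Option W) :=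
  H.map Function.Embedding.some ⊔ fromEdgeSet ((fun w ↦ s(none, some w)) '' S)

@[simp]
lemma cone_adj_some_some {u v : W} : (cone H S).Adj (some u) (some v) ↔ H.Adj u v := by
  simpa [cone, map_adj'] using Adj.ne

@[simp]
lemma cone_adj_none_some {v : W} : (cone H S).Adj none (some v) ↔ v ∈ S := by
  simp [cone, map_adj']

@[simp]
lemma cone_adj_some_none {v : W} : (cone H S).Adj (some v) none ↔ v ∈ S := by
  rw [adj_comm, cone_adj_none_some]

lemma edgeSet_cone : (cone H S).edgeSet =
    Function.Embedding.some.sym2Map '' H.edgeSet ∪ (fun w ↦ s(none, some w)) '' S := by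
  have not_diag : Disjoint ((fun w ↦ s(none, some w)) '' S) Sym2.diagSet := by
    rw [Set.disjoint_left]
    rintro _ ⟨w, -, rfl⟩
    simp
  rw [cone, edgeSet_sup, edgeSet_map, edgeSet_fromEdgeSet, not_diag.sdiff_eq_left]

lemma ncard_edgeSet_cone [Finite W] :
    (cone H S).edgeSet.ncard = H.edgeSet.ncard + S.ncard := by
  have disj : Disjoint (Function.Embedding.some.sym2Map '' H.edgeSet)
      ((fun w ↦ s(none, some w)) '' S) := by
    rw [Set.disjoint_left]
    rintro _ ⟨e, -, rfl⟩ ⟨w, -, he⟩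
    induction e with | _ x y
    simp at he
  rw [edgeSet_cone, Set.ncard_union_eq disj,
    Set.ncard_image_of_injective _ (Function.Embedding.injective _),
    Set.ncard_image_of_injective _ fun u v huv ↦ by simpa using huv]

lemma connected_cone (hreach : ∀ w, ∃ s ∈ S, H.Reachable s w) : (cone H S).Connected := by
  suffices from_none : ∀ x, (cone H S).Reachable none x from
    ⟨fun x y ↦ (from_none x).symm.trans (from_none y)⟩
  rintro (_ | w)
  · exact .refl _
  · obtain ⟨s, hs, hsw⟩ := hreach w
    exact (cone_adj_none_some.2 hs).reachable.trans
      (hsw.map ⟨some, fun h ↦ cone_adj_some_some.2 h⟩)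

lemma isTree_cone [Finite W] (hcard : H.edgeSet.ncard + S.ncard = Nat.card W)
    (hreach : ∀ w, ∃ s ∈ S, H.Reachable s w) : (cone H S).IsTree := by
  rw [isTree_iff_connected_and_card, Nat.card_coe_set_eq, ncard_edgeSet_cone, hcard,
    Finite.card_option]
  exact ⟨connected_cone hreach, rfl⟩

/-- The automorphism of the cone that extends a marked automorphism of the base and fixes the
apex. -/
def coneCongr (ψ : markedAut H S) : cone H S ≃g cone H S where
  toEquiv := Equiv.optionCongr ψ.1.toEquiv
  map_rel_iff' {x y} := by
    have mem_iff := mem_markedAut.1 ψ.2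
    have adj_iff {u v : W} : H.Adj (ψ.1 u) (ψ.1 v) ↔ H.Adj u v := ψ.1.map_adj_iff
    rcases x with _ | u <;> rcases y with _ | v <;> simp [mem_iff, adj_iff]

lemma exists_eq_coneCongr {φ : cone H S ≃g cone H S} (hφ : φ none = none) :
    ∃ ψ : markedAut H S, coneCongr ψ = φ := by
  have φ_some (w : W) : φ (some w) = some (Equiv.removeNone φ.toEquiv w) := by
    refine (Equiv.removeNone_some _ (Option.ne_none_iff_exists'.1 fun h ↦ ?_)).symm
    exact Option.some_ne_none w (φ.injective (h.trans hφ.symm))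
  let ψ : H ≃g H :=
    { toEquiv := Equiv.removeNone φ.toEquiv
      map_rel_iff' {u v} := by
        rw [← cone_adj_some_some (S := S), ← φ_some, ← φ_some, φ.map_adj_iff, cone_adj_some_some] }
  have hψ : ψ ∈ markedAut H S := mem_markedAut.2 fun w ↦ by
    have adj_iff := φ.map_adj_iff (v := none) (w := some w)
    rwa [hφ, φ_some, cone_adj_none_some, cone_adj_none_some] at adj_iff
  refine ⟨⟨ψ, hψ⟩, RelIso.ext ?_⟩
  rintro (_ | w)
  · exact hφ.symm
  · exact (φ_some w).symm

/-- `coneCongr` as a homomorphism into the stabilizer of the apex. -/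
def coneHom (H : SimpleGraph W) (S : Set W) : markedAut H S →* markedAut (cone H S) {none} where
  toFun ψ := ⟨coneCongr ψ, mem_markedAut_singleton.2 rfl⟩
  map_one' := Subtype.ext <| RelIso.ext <| by rintro (_ | w) <;> rfl
  map_mul' ψ χ := Subtype.ext <| RelIso.ext <| by rintro (_ | w) <;> rfl

lemma coneHom_bijective : Function.Bijective (coneHom H S) := by
  refine ⟨fun ψ χ h ↦ Subtype.ext <| RelIso.ext fun w ↦ ?_, fun φ ↦ ?_⟩
  · exact Option.some_injective _ (DFunLike.congr_fun (Subtype.ext_iff.1 h) (some w))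
  · exact (exists_eq_coneCongr (mem_markedAut_singleton.1 φ.2)).imp fun _ ↦ Subtype.ext

/-- Marked automorphisms of the base are the same as automorphisms of the cone fixing the apex. -/
noncomputable def coneAut (H : SimpleGraph W) (S : Set W) :
    markedAut H S ≃* markedAut (cone H S) {none} :=
  MulEquiv.ofBijective (coneHom H S) coneHom_bijective

lemma eq_none_of_cone_triangle (hH : H.CliqueFree 3) {x y z : Option W}
    (hxy : (cone H S).Adj x y) (hxz : (cone H S).Adj x z) (hyz : (cone H S).Adj y z) :
    x = none ∨ y = none ∨ z = none := by
  classical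
  by_contra! ⟨hx, hy, hz⟩
  obtain ⟨u, rfl⟩ := Option.ne_none_iff_exists'.1 hx
  obtain ⟨v, rfl⟩ := Option.ne_none_iff_exists'.1 hy
  obtain ⟨w, rfl⟩ := Option.ne_none_iff_exists'.1 hz
  rw [cone_adj_some_some] at hxy hxz hyz
  exact hH {u, v, w} (is3Clique_triple_iff.2 ⟨hxy, hxz, hyz⟩)

lemma cone_aut_apply_none (hH : H.CliqueFree 3) {a b c d : W} (hab : H.Adj a b) (hcd : H.Adj c d)
    (ha : a ∈ S) (hb : b ∈ S) (hc : c ∈ S) (hd : d ∈ S)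
    (hdisj : Disjoint ({a, b} : Set W) {c, d}) (φ : cone H S ≃g cone H S) : φ none = none := by
  have triangle {x y : W} (hxy : H.Adj x y) (hx : x ∈ S) (hy : y ∈ S) :
      φ none = none ∨ φ (some x) = none ∨ φ (some y) = none :=
    eq_none_of_cone_triangle hH (φ.map_adj_iff.2 (cone_adj_none_some.2 hx))
      (φ.map_adj_iff.2 (cone_adj_none_some.2 hy)) (φ.map_adj_iff.2 (cone_adj_some_some.2 hxy))
  by_contra hnone
  have hx : ∃ x ∈ ({a, b} : Set W), φ (some x) = none := by
    simpa using (triangle hab ha hb).resolve_left hnone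
  have hy : ∃ y ∈ ({c, d} : Set W), φ (some y) = none := by
    simpa using (triangle hcd hc hd).resolve_left hnone
  obtain ⟨x, hx, hφx⟩ := hx
  obtain ⟨y, hy, hφy⟩ := hy
  exact hdisj.ne_of_mem hx hy (Option.some_injective _ (φ.injective (hφx.trans hφy.symm)))

end Cone

section Sum

variable {V W : Type*} {G : SimpleGraph V} {H : SimpleGraph W} {S : Set V} {A : Set W}

lemma ncard_edgeSet_sum [Finite V] [Finite W] :
    (G ⊕g H).edgeSet.ncard = G.edgeSet.ncard + H.edgeSet.ncard := by
  simp only [← Nat.card_coe_set_eq, Nat.card_congr edgeSetSumEquiv, Nat.card_sum]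

lemma ncard_image_inl_union_image_inr [Finite V] [Finite W] :
    (Sum.inl '' S ∪ Sum.inr '' A : Set (V ⊕ W)).ncard = S.ncard + A.ncard := by
  rw [Set.ncard_union_eq (Set.disjoint_image_inl_image_inr),
    Set.ncard_image_of_injective _ Sum.inl_injective,
    Set.ncard_image_of_injective _ Sum.inr_injective]

lemma sum_exists_mem_reachable (hG : ∀ v, ∃ s ∈ S, G.Reachable s v)
    (hH : ∀ w, ∃ a ∈ A, H.Reachable a w) (x : V ⊕ W) :
    ∃ s ∈ (Sum.inl '' S ∪ Sum.inr '' A : Set (V ⊕ W)), (G ⊕g H).Reachable s x := by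
  rcases x with v | w
  · obtain ⟨s, hs, hsv⟩ := hG v
    exact ⟨.inl s, .inl ⟨s, hs, rfl⟩, hsv.map Embedding.sumInl.toHom⟩
  · obtain ⟨a, ha, haw⟩ := hH w
    exact ⟨.inr a, .inr ⟨a, ha, rfl⟩, haw.map Embedding.sumInr.toHom⟩

lemma reachable_inl_iff (hG : G.Preconnected) {v : V} {x : V ⊕ W} :
    (G ⊕g H).Reachable (.inl v) x ↔ x ∈ Set.range Sum.inl := by
  rcases x with v' | w
  · simpa using (hG v v').map Embedding.sumInl.toHom
  · simpa using not_reachable_sum_inl_inr v w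

lemma reachable_inr_iff (hH : H.Preconnected) {w : W} {x : V ⊕ W} :
    (G ⊕g H).Reachable (.inr w) x ↔ x ∈ Set.range Sum.inr := by
  rcases x with v | w'
  · simpa using mt Reachable.symm (not_reachable_sum_inl_inr v w)
  · simpa using (hH w w').map Embedding.sumInr.toHom

lemma sum_iso_mapsTo_inl_of_card_ne (hG : G.Preconnected) (hH : H.Preconnected)
    (hcard : Nat.card V ≠ Nat.card W) (φ : G ⊕g H ≃g G ⊕g H) :
    Set.MapsTo φ (Set.range Sum.inl) (Set.range Sum.inl) := by
  rintro _ ⟨v, rfl⟩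
  rcases hφv : φ (.inl v) with v' | w
  · exact ⟨v', rfl⟩
  have image_eq : φ '' Set.range Sum.inl = Set.range Sum.inr := by
    ext x
    rw [← φ.apply_symm_apply x, φ.injective.mem_set_image,
      ← reachable_inl_iff (H := H) hG (v := v), ← reachable_inr_iff (G := G) hH (w := w), ← hφv,
      φ.reachable_iff]
  refine absurd ?_ hcard
  rw [← Set.ncard_range_of_injective Sum.inl_injective,
    ← Set.ncard_image_of_injective _ φ.injective, image_eq,
    Set.ncard_range_of_injective Sum.inr_injective]

lemma sum_iso_mapsTo_inl_of_subsingleton [Finite V] [Finite W] (hS : S.Subsingleton)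
    (hA : ∀ w, ∃ a ∈ A, ∃ b ∈ A, H.Adj a b ∧ H.Reachable a w)
    {φ : G ⊕g H ≃g G ⊕g H} (hφ : φ ∈ markedAut (G ⊕g H) (Sum.inl '' S ∪ Sum.inr '' A)) :
    Set.MapsTo φ (Set.range Sum.inl) (Set.range Sum.inl) := by
  refine (Equiv.Perm.perm_mapsTo_inl_iff_mapsTo_inr φ.toEquiv).2 ?_
  rintro _ ⟨w, rfl⟩
  obtain ⟨a, ha, b, hb, hab, haw⟩ := hA w
  rcases hφw : φ (.inr w) with v | w'
  swap
  · exact ⟨w', rfl⟩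
  have φ_eq_inl {c : W} (hc : c ∈ A) (hcw : H.Reachable c w) : ∃ s ∈ S, φ (.inr c) = .inl s := by
    have reachable : (G ⊕g H).Reachable (φ (.inr c)) (φ (.inr w)) :=
      φ.reachable_iff.2 (hcw.map Embedding.sumInr.toHom)
    have mem := (mem_markedAut.1 hφ (.inr c)).2 (.inr ⟨c, hc, rfl⟩)
    rcases hφc : φ (.inr c) with s | d
    · rw [hφc] at mem
      exact ⟨s, by simpa using mem, rfl⟩
    · rw [hφc, hφw] at reachable
      exact absurd reachable.symm (not_reachable_sum_inl_inr v d)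
  obtain ⟨s, hs, hφa⟩ := φ_eq_inl ha haw
  obtain ⟨t, ht, hφb⟩ := φ_eq_inl hb (hab.symm.reachable.trans haw)
  have φ_eq : φ (.inr a) = φ (.inr b) := by rw [hφa, hφb, hS hs ht]
  exact absurd (Sum.inr_injective (φ.injective φ_eq)) hab.ne

variable (G H S A) in
/-- Marked automorphisms of two graphs acting side by side on their disjoint union. -/
def sumHom : markedAut G S × markedAut H A →*
    markedAut (G ⊕g H) (Sum.inl '' S ∪ Sum.inr '' A) where
  toFun p := ⟨Iso.sumCongr p.1 p.2, mem_markedAut.2 <| by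
    have mem_iff₁ := mem_markedAut.1 p.1.2
    have mem_iff₂ := mem_markedAut.1 p.2.2
    rintro (v | w) <;> simp [mem_iff₁, mem_iff₂]⟩
  map_one' := Subtype.ext <| RelIso.ext <| by rintro (v | w) <;> rfl
  map_mul' p q := Subtype.ext <| RelIso.ext <| by rintro (v | w) <;> rfl

lemma sumHom_injective : Function.Injective (sumHom G H S A) := by
  intro p q hpq
  have apply_eq (x : V ⊕ W) : (sumHom G H S A p).1 x = (sumHom G H S A q).1 x := by rw [hpq]
  refine Prod.ext (Subtype.ext <| RelIso.ext fun v ↦ ?_) (Subtype.ext <| RelIso.ext fun w ↦ ?_)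
  · exact Sum.inl_injective (apply_eq (.inl v))
  · exact Sum.inr_injective (apply_eq (.inr w))

lemma exists_eq_sumCongr [Finite V] [Finite W] {φ : G ⊕g H ≃g G ⊕g H}
    (hφ : Set.MapsTo φ (Set.range Sum.inl) (Set.range Sum.inl)) :
    ∃ (α : G ≃g G) (β : H ≃g H), Iso.sumCongr α β = φ := by
  obtain ⟨⟨σ, τ⟩, hστ⟩ := Equiv.Perm.mem_sumCongrHom_range_of_perm_mapsTo_inl (σ := φ.toEquiv) hφ
  have φ_inl (v : V) : φ (.inl v) = .inl (σ v) := (Equiv.congr_fun hστ (.inl v)).symm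
  have φ_inr (w : W) : φ (.inr w) = .inr (τ w) := (Equiv.congr_fun hστ (.inr w)).symm
  let α : G ≃g G := ⟨σ, fun {u v} ↦ by
    simpa [φ_inl] using φ.map_adj_iff (v := .inl u) (w := .inl v)⟩
  let β : H ≃g H := ⟨τ, fun {u v} ↦ by
    simpa [φ_inr] using φ.map_adj_iff (v := .inr u) (w := .inr v)⟩
  refine ⟨α, β, RelIso.ext ?_⟩
  rintro (v | w)
  · exact (φ_inl v).symm
  · exact (φ_inr w).symm

lemma sumHom_surjective [Finite V] [Finite W]
    (hsides : ∀ φ ∈ markedAut (G ⊕g H) (Sum.inl '' S ∪ Sum.inr '' A),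
      Set.MapsTo φ (Set.range Sum.inl) (Set.range Sum.inl)) :
    Function.Surjective (sumHom G H S A) := by
  rintro ⟨φ, hφ⟩
  obtain ⟨α, β, rfl⟩ := exists_eq_sumCongr (hsides φ hφ)
  rw [mem_markedAut] at hφ
  have hα : α ∈ markedAut G S := mem_markedAut.2 fun v ↦ by simpa using hφ (.inl v)
  have hβ : β ∈ markedAut H A := mem_markedAut.2 fun w ↦ by simpa using hφ (.inr w)
  exact ⟨(⟨α, hα⟩, ⟨β, hβ⟩), rfl⟩

/-- The marked automorphism group of a disjoint union is the product of those of the two sides, as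
soon as no marked automorphism moves a vertex of the left side to the right. -/
noncomputable def sumAut [Finite V] [Finite W]
    (hsides : ∀ φ ∈ markedAut (G ⊕g H) (Sum.inl '' S ∪ Sum.inr '' A),
      Set.MapsTo φ (Set.range Sum.inl) (Set.range Sum.inl)) :
    markedAut G S × markedAut H A ≃* markedAut (G ⊕g H) (Sum.inl '' S ∪ Sum.inr '' A) :=
  MulEquiv.ofBijective (sumHom G H S A) ⟨sumHom_injective, sumHom_surjective hsides⟩

end Sum

section Wreath

variable {ι V : Type} {T : SimpleGraph V} {S : Set V}

/-- The disjoint union of copies of `T` indexed by `ι`, encoded as the box product with the edgeless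
graph so that its reachability relation comes from `reachable_boxProd`. -/
abbrev copies (ι : Type) (T : SimpleGraph V) : SimpleGraph (ι × V) :=
  (⊥ : SimpleGraph ι) □ T

lemma copies_adj_iff {x y : ι × V} :
    (copies ι T).Adj x y ↔ T.Adj x.2 y.2 ∧ x.1 = y.1 := by
  simp [boxProd_adj]

lemma copies_reachable_iff (hT : T.Preconnected) {x y : ι × V} :
    (copies ι T).Reachable x y ↔ x.1 = y.1 := by
  rw [reachable_boxProd, reachable_bot, and_iff_left (hT _ _)]

lemma edgeSet_copies : (copies ι T).edgeSet =
    (fun p : ι × Sym2 V ↦ p.2.map (Prod.mk p.1)) '' Set.univ ×ˢ T.edgeSet := by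
  ext e
  induction e with | _ x y
  rcases x with ⟨i, u⟩
  rcases y with ⟨j, v⟩
  rw [mem_edgeSet, copies_adj_iff]
  constructor
  · rintro ⟨huv, rfl : i = j⟩
    exact ⟨(i, s(u, v)), ⟨trivial, huv⟩, rfl⟩
  · rintro ⟨⟨k, e⟩, ⟨-, he⟩, heq⟩
    induction e with | _ u' v'
    have he : T.Adj u' v' := he
    have := he.symm
    aesop

lemma ncard_edgeSet_copies :
    (copies ι T).edgeSet.ncard = Nat.card ι * T.edgeSet.ncard := by
  have map_injective :
      Function.Injective fun p : ι × Sym2 V ↦ p.2.map (Prod.mk p.1) := by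
    rintro ⟨i, e⟩ ⟨j, f⟩ h
    induction e with | _ a b
    induction f with | _ c d
    aesop
  rw [edgeSet_copies, Set.ncard_image_of_injective _ map_injective, Set.ncard_prod,
    Set.ncard_univ]

/-- The wreath product acting on the copies of `T`: the copy `i` is moved to the copy
`g.right i`, and the base component is then applied at the target index, as the convention of
`permHom` requires. -/
def wreathIso (g : (ι → markedAut T S) ⋊[permHom ι (markedAut T S)] Equiv.Perm ι) :
    copies ι T ≃g copies ι T where
  toFun x := (g.right x.1, (g.left (g.right x.1)).1 x.2)
  invFun x := (g.right.symm x.1, (g.left x.1).1.symm x.2)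
  left_inv x := by simp
  right_inv x := by simp
  map_rel_iff' {x y} := by
    simp only [Equiv.coe_fn_mk, copies_adj_iff, EmbeddingLike.apply_eq_iff_eq]
    exact and_congr_left fun h ↦ by rw [h, Iso.map_adj_iff]

variable (ι T S) in
/-- `wreathIso` as a homomorphism; the marks are those of all the copies. -/
def wreathHom : (ι → markedAut T S) ⋊[permHom ι (markedAut T S)] Equiv.Perm ι →*
    markedAut (copies ι T) (Prod.snd ⁻¹' S) where
  toFun g := ⟨wreathIso g, mem_markedAut.2 fun x ↦ mem_markedAut.1 (g.left (g.right x.1)).2 x.2⟩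
  map_one' := rfl
  map_mul' g h := Subtype.ext <| RelIso.ext fun x ↦ by
    have left_mul (i : ι) :
        (g * h).left (g.right i) = g.left (g.right i) * h.left (g.right.symm (g.right i)) := rfl
    refine Prod.ext rfl ?_
    change ((g * h).left (g.right (h.right x.1))).1 x.2 = _
    rw [left_mul, g.right.symm_apply_apply]
    rfl

lemma wreathHom_apply (g : (ι → markedAut T S) ⋊[permHom ι (markedAut T S)] Equiv.Perm ι)
    (i : ι) (v : V) :
    (wreathHom ι T S g).1 (i, v) = (g.right i, (g.left (g.right i)).1 v) :=
  rfl

lemma wreathHom_injective [Nonempty V] : Function.Injective (wreathHom ι T S) := by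
  intro g h hgh
  have apply_eq (i : ι) (v : V) :
      (g.right i, (g.left (g.right i)).1 v) = (h.right i, (h.left (h.right i)).1 v) := by
    rw [← wreathHom_apply, hgh, wreathHom_apply]
  have right_eq : g.right = h.right :=
    Equiv.ext fun i ↦ congrArg Prod.fst (apply_eq i (Classical.arbitrary V))
  refine SemidirectProduct.ext (funext fun i ↦ Subtype.ext <| RelIso.ext fun v ↦ ?_) right_eq
  simpa [← right_eq] using congrArg Prod.snd (apply_eq (g.right.symm i) v)

lemma exists_perm_fst_apply_eq [Nonempty V] (hT : T.Preconnected)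
    (φ : copies ι T ≃g copies ι T) :
    ∃ σ : Equiv.Perm ι, ∀ x, (φ x).1 = σ x.1 := by
  have fst_eq_iff (x y : ι × V) : (φ x).1 = (φ y).1 ↔ x.1 = y.1 := by
    rw [← copies_reachable_iff hT, φ.reachable_iff, copies_reachable_iff hT]
  let r : V := Classical.arbitrary V
  let σ : ι → ι := fun i ↦ (φ (i, r)).1
  have fst_apply (x : ι × V) : (φ x).1 = σ x.1 := (fst_eq_iff x (x.1, r)).2 rfl
  refine ⟨Equiv.ofBijective σ ⟨fun i j h ↦ (fst_eq_iff (i, r) (j, r)).1 h, fun j ↦ ?_⟩, fst_apply⟩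
  exact ⟨(φ.symm (j, r)).1, by rw [← fst_apply, φ.apply_symm_apply]⟩

lemma exists_apply_eq_of_fst_apply_eq {φ : copies ι T ≃g copies ι T}
    {σ : Equiv.Perm ι} (hσ : ∀ x, (φ x).1 = σ x.1) (i : ι) :
    ∃ ψ : T ≃g T, ∀ v, φ (i, v) = (σ i, ψ v) := by
  have φ_apply (v : V) : φ (i, v) = (σ i, (φ (i, v)).2) := Prod.ext (hσ _) rfl
  have φ_symm_apply (v : V) : φ.symm (σ i, v) = (i, (φ.symm (σ i, v)).2) :=
    Prod.ext (σ.injective (by rw [← hσ, φ.apply_symm_apply])) rfl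
  let ψ : T ≃g T :=
    { toFun v := (φ (i, v)).2
      invFun v := (φ.symm (σ i, v)).2
      left_inv v := by simp only [← φ_apply, φ.symm_apply_apply]
      right_inv v := by simp only [← φ_symm_apply, φ.apply_symm_apply]
      map_rel_iff' {u v} := by
        have adj_iff := φ.map_adj_iff (v := (i, u)) (w := (i, v))
        rwa [φ_apply u, φ_apply v, boxProd_adj_right, boxProd_adj_right] at adj_iff }
  exact ⟨ψ, φ_apply⟩

lemma wreathHom_surjective [Nonempty V] (hT : T.Preconnected) :
    Function.Surjective (wreathHom ι T S) := by
  rintro ⟨φ, hφ⟩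
  obtain ⟨σ, hσ⟩ := exists_perm_fst_apply_eq hT φ
  choose ψ hψ using exists_apply_eq_of_fst_apply_eq hσ
  have ψ_mem (i : ι) : ψ i ∈ markedAut T S := mem_markedAut.2 fun v ↦ by
    simpa [hψ] using mem_markedAut.1 hφ (i, v)
  refine ⟨⟨fun j ↦ ⟨ψ (σ.symm j), ψ_mem _⟩, σ⟩, Subtype.ext <| RelIso.ext fun ⟨i, v⟩ ↦ ?_⟩
  simp only [wreathHom_apply, hψ, σ.symm_apply_apply]

variable (ι S) in
/-- The marked automorphism group of `ι` copies of a connected graph is a wreath product, because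
automorphisms permute the connected components. -/
noncomputable def wreathAut [Nonempty V] (hT : T.Preconnected) :
    (ι → markedAut T S) ⋊[permHom ι (markedAut T S)] Equiv.Perm ι ≃*
      markedAut (copies ι T) (Prod.snd ⁻¹' S) :=
  MulEquiv.ofBijective (wreathHom ι T S) ⟨wreathHom_injective, wreathHom_surjective hT⟩

variable (ι) in
/-- The isomorphism of wreath products by `Equiv.Perm ι` induced by an isomorphism of the base
groups. -/
def wreathCongr {G H : Type} [Group G] [Group H] (e : G ≃* H) :
    (ι → G) ⋊[permHom ι G] Equiv.Perm ι ≃* (ι → H) ⋊[permHom ι H] Equiv.Perm ι :=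
  SemidirectProduct.congr (MulEquiv.piCongrRight fun _ ↦ e) (MulEquiv.refl _) fun _ ↦ rfl

end Wreath

section Center

variable {V W : Type*} {G : SimpleGraph V} {H : SimpleGraph W}

lemma edist_map_le (f : G →g H) (u v : V) : H.edist (f u) (f v) ≤ G.edist u v :=
  le_iInf fun p ↦ (edist_le (p.map f)).trans_eq (by rw [Walk.length_map])

lemma edist_iso (φ : G ≃g H) (u v : V) : H.edist (φ u) (φ v) = G.edist u v := by
  refine (edist_map_le φ.toHom u v).antisymm ?_
  simpa using edist_map_le φ.symm.toHom (φ u) (φ v)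

lemma eccent_iso (φ : G ≃g H) (u : V) : H.eccent (φ u) = G.eccent u := by
  simp only [eccent_def, ← edist_iso φ]
  exact (φ.toEquiv.iSup_comp (g := fun w ↦ H.edist (φ u) w)).symm

lemma mem_markedAut_center (φ : G ≃g G) : φ ∈ markedAut G G.center :=
  mem_markedAut.2 fun v ↦ by rw [mem_center_iff, mem_center_iff, eccent_iso]

lemma dist_lt_length_of_mem_support {u v w : V} {p : G.Walk u v} (hw : w ∈ p.support)
    (hwu : w ≠ u) : G.dist w v < p.length := by
  classical
  have split_length : (p.takeUntil w hw).length + (p.dropUntil w hw).length = p.length := by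
    rw [← Walk.length_append, Walk.take_spec]
  have take_pos : (p.takeUntil w hw).length ≠ 0 := fun h ↦ hwu (Walk.eq_of_length_eq_zero h).symm
  have dist_le_drop := dist_le (p.dropUntil w hw)
  lia

lemma dist_lt_or_dist_lt_of_mem_support (hG : G.IsTree) {u v w : V} {p : G.Walk u v}
    (hp : p.IsPath) (hw : w ∈ p.support) (hwu : w ≠ u) (hwv : w ≠ v) (x : V) :
    G.dist w x < G.dist u x ∨ G.dist w x < G.dist v x := by
  classical
  obtain ⟨q, hq⟩ := hG.connected.exists_walk_length_eq_dist u x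
  obtain ⟨r, hr⟩ := hG.connected.exists_walk_length_eq_dist v x
  have hw' : w ∈ (q.append r.reverse).support := by
    have p_eq := (hG.existsUnique_path u v).unique hp (q.append r.reverse).bypass_isPath
    exact Walk.support_bypass_subset_support _ (p_eq ▸ hw)
  rw [Walk.mem_support_append_iff, Walk.support_reverse, List.mem_reverse] at hw'
  rw [← hq, ← hr]
  exact hw'.imp (dist_lt_length_of_mem_support · hwu) (dist_lt_length_of_mem_support · hwv)

lemma edist_lt_max_of_mem_support (hG : G.IsTree) {u v w : V} {p : G.Walk u v}
    (hp : p.IsPath) (hw : w ∈ p.support) (hwu : w ≠ u) (hwv : w ≠ v) (x : V) :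
    G.edist w x < max (G.edist u x) (G.edist v x) := by
  simp only [← (hG.connected _ _).coe_dist_eq_edist, lt_max_iff, Nat.cast_lt]
  exact dist_lt_or_dist_lt_of_mem_support hG hp hw hwu hwv x

lemma isClique_center [Finite V] (hG : G.IsTree) : G.IsClique G.center := by
  intro u hu v hv huv
  by_contra hadj
  obtain ⟨p, hp⟩ := (hG.existsUnique_path u v).exists
  obtain ⟨w, hw, hwu, hwv⟩ : ∃ w ∈ p.support, w ≠ u ∧ w ≠ v := by
    cases p with
    | nil => exact absurd rfl huv
    | @cons _ w _ huw q => exact ⟨w, by simp, huw.ne', fun h ↦ hadj (h ▸ huw)⟩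
  obtain ⟨x, hx⟩ := G.exists_edist_eq_eccent_of_finite w
  refine (G.radius_le_eccent (u := w)).not_gt ?_
  calc G.eccent w = G.edist w x := hx.symm
    _ < max (G.edist u x) (G.edist v x) := edist_lt_max_of_mem_support hG hp hw hwu hwv x
    _ ≤ max (G.eccent u) (G.eccent v) := max_le_max edist_le_eccent edist_le_eccent
    _ = G.radius := by rw [(mem_center_iff u).1 hu, (mem_center_iff v).1 hv, max_self]

end Center

section DeleteClique

variable {V : Type*} {G : SimpleGraph V} {S : Set V}

lemma deleteEdges_sym2_adj {u v : V} :
    (G.deleteEdges S.sym2).Adj u v ↔ G.Adj u v ∧ ¬(u ∈ S ∧ v ∈ S) := by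
  rw [deleteEdges_adj, Set.mk_mem_sym2_iff]

lemma adj_iff_deleteEdges_sym2_adj_or (hS : G.IsClique S) {u v : V} :
    G.Adj u v ↔ (G.deleteEdges S.sym2).Adj u v ∨ u ≠ v ∧ u ∈ S ∧ v ∈ S := by
  rw [deleteEdges_sym2_adj]
  have adj_of_mem (h : u ≠ v ∧ u ∈ S ∧ v ∈ S) : G.Adj u v := hS h.2.1 h.2.2 h.1
  have ne_of_adj : G.Adj u v → u ≠ v := Adj.ne
  tauto

/-- Deleting the edges inside a marked clique does not change the marked automorphism group: the
clique is recovered from its vertex set. -/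
def markedAutDeleteClique (hS : G.IsClique S) :
    markedAut G S ≃* markedAut (G.deleteEdges S.sym2) S where
  toFun φ :=
    ⟨⟨φ.1.toEquiv, fun {u v} ↦ by
      have mem_iff := mem_markedAut.1 φ.2
      simp only [deleteEdges_sym2_adj, RelIso.coe_fn_toEquiv, mem_iff, Iso.map_adj_iff]⟩,
      mem_markedAut.2 (mem_markedAut.1 φ.2)⟩
  invFun φ :=
    ⟨⟨φ.1.toEquiv, fun {u v} ↦ by
      have mem_iff := mem_markedAut.1 φ.2
      simp only [adj_iff_deleteEdges_sym2_adj_or hS, RelIso.coe_fn_toEquiv, mem_iff,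
        Iso.map_adj_iff, φ.1.injective.ne_iff]⟩,
      mem_markedAut.2 (mem_markedAut.1 φ.2)⟩
  left_inv _ := rfl
  right_inv _ := rfl
  map_mul' _ _ := rfl

lemma deleteEdges_sym2_exists_mem_reachable (hG : G.Preconnected) (hS : S.Nonempty) (v : V) :
    ∃ s ∈ S, (G.deleteEdges S.sym2).Reachable s v := by
  obtain ⟨s, hs⟩ := hS
  induction hG v s with | intro p
  induction p with
  | nil => exact ⟨_, hs, .refl _⟩
  | @cons u v _ huv _ ih =>
    by_cases hu : u ∈ S
    · exact ⟨u, hu, .refl u⟩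
    · obtain ⟨t, ht, htv⟩ := ih hs
      exact ⟨t, ht, htv.trans (deleteEdges_sym2_adj.2 ⟨huv.symm, fun h ↦ hu h.2⟩).reachable⟩

lemma eq_singleton_or_pair_of_isClique (hG : G.CliqueFree 3) (hS : G.IsClique S)
    (hne : S.Nonempty) : (∃ a, S = {a}) ∨ ∃ a b, G.Adj a b ∧ S = {a, b} := by
  classical
  obtain ⟨a, ha⟩ := hne
  by_cases hb : ∃ b ∈ S, b ≠ a
  · obtain ⟨b, hb, hba⟩ := hb
    refine .inr ⟨a, b, hS ha hb hba.symm, Set.Subset.antisymm (fun c hc ↦ ?_)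
      (Set.insert_subset ha (Set.singleton_subset_iff.2 hb))⟩
    by_contra hcab
    simp only [Set.mem_insert_iff, Set.mem_singleton_iff, not_or] at hcab
    exact hG {a, b, c} (is3Clique_triple_iff.2
      ⟨hS ha hb hba.symm, hS ha hc (Ne.symm hcab.1), hS hb hc (Ne.symm hcab.2)⟩)
  · push Not at hb
    exact .inl ⟨a, Set.eq_singleton_iff_unique_mem.2 ⟨ha, hb⟩⟩

lemma ncard_edgeSet_inter_sym2_add_one (hG : G.CliqueFree 3) (hS : G.IsClique S)
    (hne : S.Nonempty) : (G.edgeSet ∩ S.sym2).ncard + 1 = S.ncard := by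
  rcases eq_singleton_or_pair_of_isClique hG hS hne with ⟨a, rfl⟩ | ⟨a, b, hab, rfl⟩
  · have inter_eq : G.edgeSet ∩ Set.sym2 {a} = ∅ := by
      ext e
      induction e with | _ u v
      simp +contextual
    rw [inter_eq, Set.ncard_empty, Set.ncard_singleton]
  · have inter_eq : G.edgeSet ∩ Set.sym2 {a, b} = {s(a, b)} := by
      ext e
      induction e with | _ u v
      have := hab.symm
      aesop
    rw [inter_eq, Set.ncard_singleton, Set.ncard_pair hab.ne]

end DeleteClique

section RootedTree

/-- `G` is the automorphism group of a finite rooted tree, that is, the stabilizer of a vertex in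
the automorphism group of a finite tree. -/
def IsRootedTreeAut (G : Type) [Group G] : Prop :=
  ∃ (V : Type) (_ : Finite V) (T : SimpleGraph V) (r : V),
    T.IsTree ∧ Nonempty (G ≃* markedAut T {r})

lemma ncard_edgeSet_add_one_of_isTree {V : Type*} [Finite V] {T : SimpleGraph V} (hT : T.IsTree) :
    T.edgeSet.ncard + 1 = Nat.card V := by
  rw [← Nat.card_coe_set_eq, (isTree_iff_connected_and_card.1 hT).2]

lemma exists_mem_singleton_reachable {V : Type*} {T : SimpleGraph V} (hT : T.Preconnected)
    (r v : V) : ∃ s ∈ ({r} : Set V), T.Reachable s v :=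
  ⟨r, rfl, hT r v⟩

lemma isRootedTreeAut_markedAut {W : Type} [Finite W] {H : SimpleGraph W} {S : Set W}
    (hcard : H.edgeSet.ncard + S.ncard = Nat.card W)
    (hreach : ∀ w, ∃ s ∈ S, H.Reachable s w) : IsRootedTreeAut (markedAut H S) :=
  ⟨Option W, inferInstance, cone H S, none, isTree_cone hcard hreach, ⟨coneAut H S⟩⟩

lemma IsRootedTreeAut.congr {G H : Type} [Group G] [Group H] (hG : IsRootedTreeAut G)
    (e : G ≃* H) : IsRootedTreeAut H := by
  obtain ⟨V, hV, T, r, hT, ⟨f⟩⟩ := hG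
  exact ⟨V, hV, T, r, hT, ⟨e.symm.trans f⟩⟩

lemma isRootedTreeAut_punit : IsRootedTreeAut PUnit := by
  refine ⟨PUnit, inferInstance, ⊥, .unit, .of_subsingleton, ⟨?_⟩⟩
  have : Unique (markedAut (⊥ : SimpleGraph PUnit) {.unit}) :=
    ⟨⟨1⟩, fun φ ↦ Subtype.ext <| RelIso.ext fun _ ↦ rfl⟩
  exact MulEquiv.ofUnique

lemma isRootedTreeAut_prod_of_card_ne {V W : Type} [Finite V] [Finite W] {T : SimpleGraph V}
    {U : SimpleGraph W} (hT : T.IsTree) (hU : U.IsTree) (hcard : Nat.card V ≠ Nat.card W)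
    (r : V) (s : W) : IsRootedTreeAut (markedAut T {r} × markedAut U {s}) := by
  have hT_pre := hT.connected.preconnected
  have hU_pre := hU.connected.preconnected
  refine (isRootedTreeAut_markedAut ?_ ?_).congr
    (sumAut fun φ _ ↦ sum_iso_mapsTo_inl_of_card_ne hT_pre hU_pre hcard φ).symm
  · rw [ncard_edgeSet_sum, ncard_image_inl_union_image_inr, Set.ncard_singleton,
      Set.ncard_singleton, Nat.card_sum, ← ncard_edgeSet_add_one_of_isTree hT,
      ← ncard_edgeSet_add_one_of_isTree hU]
    ring
  · exact sum_exists_mem_reachable (exists_mem_singleton_reachable hT_pre r)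
      (exists_mem_singleton_reachable hU_pre s)

lemma IsRootedTreeAut.prod {G H : Type} [Group G] [Group H] (hG : IsRootedTreeAut G)
    (hH : IsRootedTreeAut H) : IsRootedTreeAut (G × H) := by
  obtain ⟨V, _, T, r, hT, ⟨e⟩⟩ := hG
  obtain ⟨W, _, U, s, hU, ⟨f⟩⟩ := hH
  by_cases hcard : Nat.card V = Nat.card W
  · have hU' : (cone U {s}).IsTree := isTree_cone
      (by rw [Set.ncard_singleton, ncard_edgeSet_add_one_of_isTree hU])
      (exists_mem_singleton_reachable hU.connected.preconnected s)
    have hcard' : Nat.card V ≠ Nat.card (Option W) := by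
      rw [Finite.card_option, hcard]
      exact (Nat.succ_ne_self _).symm
    exact (isRootedTreeAut_prod_of_card_ne hT hU' hcard' r none).congr
      (e.prodCongr (f.trans (coneAut U {s}))).symm
  · exact (isRootedTreeAut_prod_of_card_ne hT hU hcard r s).congr (e.prodCongr f).symm

lemma IsRootedTreeAut.wreath {G : Type} [Group G] (ι : Type) [Finite ι]
    (hG : IsRootedTreeAut G) : IsRootedTreeAut ((ι → G) ⋊[permHom ι G] Equiv.Perm ι) := by
  obtain ⟨V, _, T, r, hT, ⟨e⟩⟩ := hG
  have hT_pre := hT.connected.preconnected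
  have := hT.connected.nonempty
  refine (isRootedTreeAut_markedAut ?_ fun x ↦ ?_).congr
    ((wreathCongr ι e).trans (wreathAut ι {r} hT_pre)).symm
  · have ncard_marks : (Prod.snd ⁻¹' {r} : Set (ι × V)).ncard = Nat.card ι := by
      rw [← Set.univ_prod, Set.ncard_prod, Set.ncard_univ, Set.ncard_singleton, mul_one]
    rw [ncard_edgeSet_copies, ncard_marks, Nat.card_prod, ← ncard_edgeSet_add_one_of_isTree hT]
    ring
  · exact ⟨(x.1, r), rfl, (copies_reachable_iff hT_pre).2 rfl⟩

lemma isRootedTreeAut_of_jordanT {G : Type} [Group G] (hG : JordanT G) : IsRootedTreeAut G := by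
  induction hG with
  | triv => exact isRootedTreeAut_punit
  | congr _ e ih => exact ih.congr e
  | prod _ _ ihG ihH => exact ihG.prod ihH
  | wreath n _ _ ih => exact ih.wreath (Fin n)

lemma isRootedTreeAut_aut_of_isTree {V : Type} [Finite V] {T : SimpleGraph V} (hT : T.IsTree) :
    IsRootedTreeAut (T ≃g T) := by
  have := hT.connected.nonempty
  have center_clique := isClique_center hT
  have cliqueFree : T.CliqueFree 3 := hT.colorable_two.cliqueFree (by norm_num)
  refine (isRootedTreeAut_markedAut ?_ (deleteEdges_sym2_exists_mem_reachable
    hT.connected.preconnected T.center_nonempty)).congr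
    ((markedAutEquivOfForallMem mem_markedAut_center).trans
      (markedAutDeleteClique center_clique)).symm
  rw [edgeSet_deleteEdges, ← ncard_edgeSet_add_one_of_isTree hT,
    ← ncard_edgeSet_inter_sym2_add_one cliqueFree center_clique T.center_nonempty,
    ← Set.ncard_inter_add_ncard_sdiff_eq_ncard T.edgeSet T.center.sym2]
  ring

end RootedTree

section Bicyclic

/-- The disjoint union of the paths `0 - 1 - 2` and `3 - 4 - 5 - 6`; their different lengths make
the marked graph rigid. -/
def twoPaths : SimpleGraph (Fin 7) :=
  fromRel fun i j ↦ i.val + 1 = j ∧ i ≠ 2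

instance : DecidableRel twoPaths.Adj := by
  unfold twoPaths
  infer_instance

/-- An end edge of each path in `twoPaths`, so that the cone turns each of these edges into a
triangle. -/
def twoPathsMarks : Finset (Fin 7) :=
  {0, 1, 3, 4}

lemma ncard_edgeSet_twoPaths : twoPaths.edgeSet.ncard = 5 := by
  rw [← coe_edgeFinset, Set.ncard_coe_finset]
  decide

lemma colorable_two_twoPaths : twoPaths.Colorable 2 :=
  ⟨Coloring.mk (fun i ↦ Fin.ofNat 2 i) (by decide)⟩

lemma twoPaths_exists_mem_adj_reachable (w : Fin 7) :
    ∃ a ∈ twoPathsMarks, ∃ b ∈ twoPathsMarks, twoPaths.Adj a b ∧ twoPaths.Reachable a w := by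
  obtain ⟨a, ha, b, hb, hab, c, hac, hcw⟩ : ∃ a ∈ twoPathsMarks, ∃ b ∈ twoPathsMarks,
      twoPaths.Adj a b ∧ ∃ c, (a = c ∨ twoPaths.Adj a c) ∧ (c = w ∨ twoPaths.Adj c w) := by
    decide +revert
  have reachable {i j : Fin 7} (h : i = j ∨ twoPaths.Adj i j) : twoPaths.Reachable i j :=
    h.elim (fun h ↦ h ▸ .refl i) Adj.reachable
  exact ⟨a, ha, b, hb, hab, (reachable hac).trans (reachable hcw)⟩

lemma twoPaths_eq_of_four_path : ∀ x y, twoPaths.Adj x y → ∀ z, twoPaths.Adj y z → x ≠ z →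
    ∀ w, twoPaths.Adj z w → y ≠ w → x ∈ twoPathsMarks → y ∈ twoPathsMarks →
      x = 3 ∧ y = 4 ∧ z = 5 ∧ w = 6 := by
  decide

lemma twoPaths_eq_of_three_path : ∀ x y, twoPaths.Adj x y → ∀ z, twoPaths.Adj y z →
    x ≠ z → x ∈ twoPathsMarks → y ∈ twoPathsMarks → x = 3 ∨ x = 0 ∧ y = 1 ∧ z = 2 := by
  decide

lemma eq_one_of_mem_markedAut_twoPaths {φ : twoPaths ≃g twoPaths}
    (hφ : φ ∈ markedAut twoPaths twoPathsMarks) : φ = 1 := by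
  have adj {i j : Fin 7} (h : twoPaths.Adj i j) : twoPaths.Adj (φ i) (φ j) := φ.map_adj_iff.2 h
  have ne {i j : Fin 7} (h : i ≠ j) : φ i ≠ φ j := φ.injective.ne h
  have mem {i : Fin 7} (h : i ∈ twoPathsMarks) : φ i ∈ twoPathsMarks := (mem_markedAut.1 hφ i).2 h
  obtain ⟨φ3, φ4, φ5, φ6⟩ := twoPaths_eq_of_four_path (φ 3) (φ 4) (adj (by decide)) (φ 5)
    (adj (by decide)) (ne (by decide)) (φ 6) (adj (by decide)) (ne (by decide))
    (mem (by decide)) (mem (by decide))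
  obtain ⟨φ0, φ1, φ2⟩ := (twoPaths_eq_of_three_path (φ 0) (φ 1) (adj (by decide)) (φ 2)
    (adj (by decide)) (ne (by decide)) (mem (by decide)) (mem (by decide))).resolve_left
    (φ3 ▸ ne (by decide))
  refine RelIso.ext fun i ↦ ?_
  fin_cases i <;> assumption

variable {V : Type} {T : SimpleGraph V} {r : V}

/-- The tree `T` hung by its vertex `r` on the apex of a bowtie, i.e. two triangles with the common
vertex `none`, whose triangles carry pendant paths of different lengths. -/
abbrev attachBowtie (T : SimpleGraph V) (r : V) : SimpleGraph (Option (V ⊕ Fin 7)) :=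
  cone (T ⊕g twoPaths) (Sum.inl '' {r} ∪ Sum.inr '' twoPathsMarks)

lemma isBicyclic_attachBowtie [Finite V] (hT : T.IsTree) : (attachBowtie T r).IsBicyclic := by
  refine ⟨connected_cone (sum_exists_mem_reachable
    (exists_mem_singleton_reachable hT.connected.preconnected r) fun w ↦ ?_), ?_⟩
  · obtain ⟨a, ha, _, _, _, haw⟩ := twoPaths_exists_mem_adj_reachable w
    exact ⟨a, ha, haw⟩
  · have ncard_marks : (twoPathsMarks : Set (Fin 7)).ncard = 4 := Set.ncard_coe_finset _
    rw [ncard_edgeSet_cone, ncard_edgeSet_sum, ncard_image_inl_union_image_inr,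
      Set.ncard_singleton, ncard_edgeSet_twoPaths, ncard_marks, Finite.card_option, Nat.card_sum,
      ← ncard_edgeSet_add_one_of_isTree hT, Nat.card_fin]

lemma attachBowtie_aut_apply_none (hT : T.IsTree) (φ : attachBowtie T r ≃g attachBowtie T r) :
    φ none = none := by
  have cliqueFree : (T ⊕g twoPaths).CliqueFree 3 :=
    (colorable_sum.2 ⟨hT.colorable_two, colorable_two_twoPaths⟩).cliqueFree (by norm_num)
  have mem {i : Fin 7} (h : i ∈ twoPathsMarks) :
      Sum.inr i ∈ (Sum.inl '' {r} ∪ Sum.inr '' twoPathsMarks : Set (V ⊕ Fin 7)) := .inr ⟨i, h, rfl⟩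
  have adj {i j : Fin 7} (h : twoPaths.Adj i j) : (T ⊕g twoPaths).Adj (.inr i) (.inr j) := h
  exact cone_aut_apply_none cliqueFree (a := .inr 0) (b := .inr 1) (c := .inr 3) (d := .inr 4)
    (adj (by decide)) (adj (by decide)) (mem (by decide)) (mem (by decide)) (mem (by decide))
    (mem (by decide)) (by simp) φ

variable (r) in
/-- The automorphisms of `attachBowtie T r` are exactly those of the rooted tree `(T, r)`. -/
noncomputable def attachBowtieAut [Finite V] (hT : T.IsTree) :
    markedAut T {r} ≃* (attachBowtie T r ≃g attachBowtie T r) :=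
  let _ : Unique (markedAut twoPaths twoPathsMarks) :=
    ⟨⟨1⟩, fun φ ↦ Subtype.ext (eq_one_of_mem_markedAut_twoPaths φ.2)⟩
  MulEquiv.prodUnique.symm.trans <|
    (sumAut fun _ hφ ↦ sum_iso_mapsTo_inl_of_subsingleton Set.subsingleton_singleton
      twoPaths_exists_mem_adj_reachable hφ).trans <|
    (coneAut _ _).trans (markedAutEquivOfForallMem fun φ ↦
      mem_markedAut_singleton.2 (attachBowtie_aut_apply_none hT φ)).symm

lemma IsRootedTreeAut.exists_isBicyclic {G : Type} [Group G] (hG : IsRootedTreeAut G) :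
    ∃ (W : Type) (_ : Fintype W) (Δ : SimpleGraph W),
      Δ.IsBicyclic ∧ Nonempty (G ≃* (Δ ≃g Δ)) := by
  obtain ⟨V, _, T, r, hT, ⟨e⟩⟩ := hG
  exact ⟨_, Fintype.ofFinite _, attachBowtie T r, isBicyclic_attachBowtie hT,
    ⟨e.trans (attachBowtieAut r hT)⟩⟩

end Bicyclic

end TreeAut

/-- For every finite tree `T` there is a bicyclic graph `Δ` with
`Aut(Δ) ≅ Aut(T)`; consequently, every group in Jordan's class `𝒯` is the automorphism
group of a bicyclic graph. -/
theorem tree_aut_realizable_as_aut_bicyclic :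
    (∀ (V : Type) [Fintype V] (T : SimpleGraph V), T.IsTree →
      ∃ (W : Type) (_ : Fintype W) (Δ : SimpleGraph W),
        Δ.IsBicyclic ∧ Nonempty ((Δ ≃g Δ) ≃* (T ≃g T))) ∧
    (∀ (G : Type) [Group G], JordanT G →
      ∃ (W : Type) (_ : Fintype W) (Δ : SimpleGraph W),
        Δ.IsBicyclic ∧ Nonempty (G ≃* (Δ ≃g Δ))) := by
  refine ⟨fun V _ T hT ↦ ?_,
    fun G _ hG ↦ (TreeAut.isRootedTreeAut_of_jordanT hG).exists_isBicyclic⟩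
  obtain ⟨W, hW, Δ, hΔ, ⟨e⟩⟩ := (TreeAut.isRootedTreeAut_aut_of_isTree hT).exists_isBicyclic
  exact ⟨W, hW, Δ, hΔ, ⟨e.symm⟩⟩
end
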